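/- arXiv:0809.0551 — 6 statements merged into one kernel-verified Lean document; each statement's English description precedes it below -/
import Mathlib

section
/- For all integers k ≥ 1 and n ≥ 1, the number of smooth words of length n over the alphabet [k] satisfies sw_{n,k} = (1/(k+1)) · ∑_{j=1}^{k} (1 + (−1)^{j+1}) · cot²(jπ/(2(k+1))) · (1 + 2cos(jπ/(k+1)))^{n−1}. -/
/-!
Put `N = k + 1` and `θ = π / N`. Smooth words are the walks on the path `1, …, k` with a loop at
each vertex, so the adjacency matrix of this graph acts on weights of the first letter
(`smoothSum_succ`). The vectors `a ↦ sin (a j θ)` are eigenvectors with eigenvalue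
`1 + 2 cos (j θ)`, because the sine vanishes at the two missing neighbours `0` and `N`
(`sum_neighbours_sin`). Hence the weighted count of words of length `n` for such a vector is the
`(n - 1)`-th power of the eigenvalue times the sum of its entries, and that sum is `cot (j θ / 2)`
for odd `j` and `0` for even `j` (`sum_sin_eq`).

It remains to expand the constant weight in the eigenvectors: for `1 ≤ a ≤ k`,
`∑ j, (1 - (-1)^j) cot (j θ / 2) sin (a j θ) = N` (`sum_cot_sin`). Increasing `a` by one changes
the summand `cot (j θ / 2) sin (a j θ)` by `cos (a j θ) + cos ((a + 1) j θ)`, so this reduces to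
the closed form of `∑ j, cos (m j θ)`.
-/

open Real Filter Finset

/-- A word of length `n` over a `k`-letter alphabet (represented as `Fin k`,
a relabeling of `{1,…,k}`) is smooth if adjacent letters differ by at most 1. -/
def IsSmooth {n k : ℕ} (σ : Fin n → Fin k) : Prop :=
  ∀ i : ℕ, ∀ hi : i + 1 < n,
    |((σ ⟨i + 1, hi⟩ : ℕ) : ℤ) - ((σ ⟨i, Nat.lt_of_succ_lt hi⟩ : ℕ) : ℤ)| ≤ 1

/-- A word is smooth cyclic if it is smooth and its last and first letters differ
by at most 1. -/
def IsSmoothCyclic {n k : ℕ} (σ : Fin n → Fin k) : Prop :=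
  IsSmooth σ ∧ ∀ h : 0 < n,
    |((σ ⟨n - 1, Nat.sub_lt h Nat.one_pos⟩ : ℕ) : ℤ) - ((σ ⟨0, h⟩ : ℕ) : ℤ)| ≤ 1

/-- `sw n k` is the number of smooth words of length `n` over a `k`-letter alphabet. -/
noncomputable def sw (n k : ℕ) : ℕ := Nat.card {σ : Fin n → Fin k // IsSmooth σ}

/-- `scw n k` is the number of smooth cyclic words of length `n` over a `k`-letter
alphabet. -/
noncomputable def scw (n k : ℕ) : ℕ := Nat.card {σ : Fin n → Fin k // IsSmoothCyclic σ}

/-- Two words are rotation equivalent if one is a cyclic rotation of the other. -/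
def RotEquiv {n k : ℕ} (σ τ : Fin n → Fin k) : Prop :=
  ∃ r : Fin n, ∀ i : Fin n, σ i = τ (i + r)

/-- `sn n k` is the number of smooth necklaces of length `n` over a `k`-letter
alphabet, i.e. the number of rotation-equivalence classes of smooth cyclic words. -/
noncomputable def sn (n k : ℕ) : ℕ :=
  Nat.card (Quot (fun σ τ : {σ : Fin n → Fin k // IsSmoothCyclic σ} => RotEquiv σ.1 τ.1))

/-- `swF n k i` is the number of smooth words of length `n` over the alphabet
`{1,…,k}` whose first letter is `i` (letters of `Fin k` are `1`-indexed via `+1`). -/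
noncomputable def swF (n k i : ℕ) : ℕ :=
  Nat.card {σ : Fin n → Fin k // IsSmooth σ ∧ ∀ h : 0 < n, (σ ⟨0, h⟩ : ℕ) + 1 = i}

/-- `swFL n k i j` is the number of smooth words of length `n` over the alphabet
`{1,…,k}` with first letter `i` and last letter `j`. -/
noncomputable def swFL (n k i j : ℕ) : ℕ :=
  Nat.card {σ : Fin n → Fin k // IsSmooth σ ∧ ∀ h : 0 < n,
    (σ ⟨0, h⟩ : ℕ) + 1 = i ∧ (σ ⟨n - 1, Nat.sub_lt h Nat.one_pos⟩ : ℕ) + 1 = j}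

/-- Chebyshev polynomial of the second kind, as a real function, with integer index. -/
noncomputable def Ueval (r : ℤ) (t : ℝ) : ℝ := (Polynomial.Chebyshev.U ℝ r).eval t

/-- The sum of `v` over the first letters of all smooth words of length `n + 1`. -/
noncomputable def smoothSum (k n : ℕ) (v : Fin k → ℝ) : ℝ :=
  open Classical in ∑ σ : Fin (n + 1) → Fin k, if IsSmooth σ then v (σ 0) else 0

lemma isSmooth_cons {n k : ℕ} (a : Fin k) (τ : Fin (n + 1) → Fin k) :
    IsSmooth (Fin.cons a τ : Fin (n + 2) → Fin k) ↔
      |(((τ 0 : Fin k) : ℕ) : ℤ) - ((a : ℕ) : ℤ)| ≤ 1 ∧ IsSmooth τ := by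
  have hsucc : ∀ (i : ℕ) (hi : i + 1 < n + 2),
      (Fin.cons a τ : Fin (n + 2) → Fin k) ⟨i + 1, hi⟩ = τ ⟨i, by omega⟩ := fun _ _ => rfl
  have hzero : ∀ h : 0 < n + 2, (Fin.cons a τ : Fin (n + 2) → Fin k) ⟨0, h⟩ = a := fun _ => rfl
  have hτ : τ 0 = τ ⟨0, by omega⟩ := rfl
  rw [hτ]
  constructor
  · intro h
    refine ⟨?_, fun i hi => ?_⟩
    · have := h 0 (by omega)
      rwa [hsucc, hzero] at this
    · have := h (i + 1) (by omega)
      rwa [hsucc, hsucc] at this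
  · rintro ⟨h0, h⟩ i hi
    cases i with
    | zero => rwa [hsucc, hzero]
    | succ i =>
      rw [hsucc, hsucc]
      exact h i (by omega)

lemma smoothSum_succ (k n : ℕ) (v : Fin k → ℝ) :
    smoothSum k (n + 1) v = smoothSum k n
      (fun b => ∑ a : Fin k, if |((b : ℕ) : ℤ) - ((a : ℕ) : ℤ)| ≤ 1 then v a else 0) := by
  classical
  unfold smoothSum
  rw [← (Fin.consEquiv (fun _ : Fin (n + 2) => Fin k)).sum_comp, Fintype.sum_prod_type_right]
  refine Finset.sum_congr rfl fun τ _ => ?_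
  by_cases hτ : IsSmooth τ <;> simp [Fin.consEquiv, isSmooth_cons, hτ]

lemma smoothSum_eigen (k : ℕ) (v : Fin k → ℝ) (l : ℝ)
    (hv : ∀ b : Fin k,
      (∑ a : Fin k, if |((b : ℕ) : ℤ) - ((a : ℕ) : ℤ)| ≤ 1 then v a else 0) = l * v b) (n : ℕ) :
    smoothSum k n v = l ^ n * ∑ a, v a := by
  classical
  have hzero : smoothSum k 0 v = ∑ a, v a := by
    unfold smoothSum
    rw [← (Equiv.funUnique (Fin 1) (Fin k)).sum_comp]
    refine Finset.sum_congr rfl fun σ _ => ?_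
    have hσ : IsSmooth σ := fun i hi => by omega
    rw [if_pos hσ]
    rfl
  induction n with
  | zero => simpa using hzero
  | succ n ih =>
    have hlin : smoothSum k n (fun b => l * v b) = l * smoothSum k n v := by
      simp only [smoothSum, Finset.mul_sum, mul_ite, mul_zero]
    rw [smoothSum_succ, funext hv, hlin, ih, pow_succ]
    ring

/-- The entries `sin (a x)`, `1 ≤ a ≤ k`, form an eigenvector as soon as `sin ((k + 1) x) = 0`. -/
lemma sum_neighbours_sin (k : ℕ) (x : ℝ) (hx : Real.sin (((k : ℝ) + 1) * x) = 0) (b : Fin k) :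
    (∑ a : Fin k, if |((b : ℕ) : ℤ) - ((a : ℕ) : ℤ)| ≤ 1
      then Real.sin ((((a : ℕ) : ℝ) + 1) * x) else 0) =
      (1 + 2 * Real.cos x) * Real.sin ((((b : ℕ) : ℝ) + 1) * x) := by
  obtain ⟨b, hb⟩ := b
  -- The two boundary positions are added to the range, where the sine vanishes.
  have h1 : (∑ a : Fin k, if |(b : ℤ) - ((a : ℕ) : ℤ)| ≤ 1
      then Real.sin ((((a : ℕ) : ℝ) + 1) * x) else 0) =
      ∑ m ∈ Finset.range (k + 2), if |((b : ℤ) + 1) - (m : ℤ)| ≤ 1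
        then Real.sin ((m : ℝ) * x) else 0 := by
    rw [Finset.sum_range_succ, Finset.sum_range_succ',
      Fin.sum_univ_eq_sum_range (fun a : ℕ => if |(b : ℤ) - (a : ℤ)| ≤ 1
        then Real.sin (((a : ℝ) + 1) * x) else 0)]
    push_cast
    simp [hx]
  have h2 : (Finset.range (k + 2)).filter (fun m : ℕ => |((b : ℤ) + 1) - (m : ℤ)| ≤ 1) =
      {b, b + 1, b + 2} := by
    ext m
    simp only [Finset.mem_filter, Finset.mem_range, Finset.mem_insert, Finset.mem_singleton,
      abs_le]
    omega
  have e0 : (b : ℝ) * x = ((b : ℝ) + 1) * x - x := by ring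
  have e2 : ((b : ℝ) + 2) * x = ((b : ℝ) + 1) * x + x := by ring
  rw [h1, ← Finset.sum_filter, h2, Finset.sum_insert (by simp), Finset.sum_insert (by simp),
    Finset.sum_singleton]
  push_cast
  rw [e0, e2, Real.sin_sub, Real.sin_add]
  ring

lemma two_sin_half_mul_sum_cos (N : ℕ) (x : ℝ) :
    2 * Real.sin (x / 2) * ∑ j ∈ Finset.range N, Real.cos (j * x) =
      Real.sin (N * x - x / 2) + Real.sin (x / 2) := by
  induction N with
  | zero => simp
  | succ N ih =>
    rw [Finset.sum_range_succ, mul_add, ih]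
    have e : ((N + 1 : ℕ) : ℝ) * x - x / 2 = N * x + x / 2 := by push_cast; ring
    rw [e, Real.sin_add, Real.sin_sub]
    ring

lemma two_sin_half_mul_sum_sin (N : ℕ) (x : ℝ) :
    2 * Real.sin (x / 2) * ∑ j ∈ Finset.range N, Real.sin (j * x) =
      Real.cos (x / 2) - Real.cos (N * x - x / 2) := by
  induction N with
  | zero => simp
  | succ N ih =>
    rw [Finset.sum_range_succ, mul_add, ih]
    have e : ((N + 1 : ℕ) : ℝ) * x - x / 2 = N * x + x / 2 := by push_cast; ring
    rw [e, Real.cos_add, Real.cos_sub]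
    ring

lemma sin_half_pos {N m : ℕ} (h0 : 0 < m) (h1 : m < 2 * N) :
    0 < Real.sin (m * (Real.pi / N) / 2) := by
  have hN : (0 : ℝ) < N := by exact_mod_cast (by omega : 0 < N)
  have hm : (0 : ℝ) < m := by exact_mod_cast h0
  have hm' : (m : ℝ) < 2 * N := by exact_mod_cast h1
  have hpi := Real.pi_pos
  apply Real.sin_pos_of_pos_of_lt_pi
  · positivity
  · have : (m : ℝ) * (Real.pi / N) / 2 = Real.pi * (m / (2 * N)) := by field_simp
    rw [this]
    have : (m : ℝ) / (2 * N) < 1 := (div_lt_one (by positivity)).2 hm'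
    nlinarith

lemma sum_cos_eq {N m : ℕ} (h0 : 0 < m) (h1 : m < 2 * N) :
    ∑ j ∈ Finset.range N, Real.cos (j * (m * (Real.pi / N))) = (1 - (-1) ^ m) / 2 := by
  have hN : (N : ℝ) ≠ 0 := by exact_mod_cast (by omega : N ≠ 0)
  have hs := sin_half_pos h0 h1
  have h := two_sin_half_mul_sum_cos N (m * (Real.pi / N))
  have e : (N : ℝ) * (m * (Real.pi / N)) = m * Real.pi := by field_simp
  rw [e, Real.sin_nat_mul_pi_sub] at h
  apply mul_left_cancel₀ (mul_ne_zero two_ne_zero hs.ne')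
  rw [h]
  ring

lemma sum_sin_eq {N j : ℕ} (h0 : 0 < j) (h1 : j < 2 * N) :
    ∑ i ∈ Finset.range N, Real.sin (i * (j * (Real.pi / N))) =
      (1 - (-1) ^ j) / 2 * Real.cot (j * (Real.pi / N) / 2) := by
  have hN : (N : ℝ) ≠ 0 := by exact_mod_cast (by omega : N ≠ 0)
  have hs := (sin_half_pos h0 h1).ne'
  have h := two_sin_half_mul_sum_sin N (j * (Real.pi / N))
  have e : (N : ℝ) * (j * (Real.pi / N)) = j * Real.pi := by field_simp
  rw [e, Real.cos_nat_mul_pi_sub] at h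
  apply mul_left_cancel₀ (mul_ne_zero two_ne_zero hs)
  rw [h, Real.cot_eq_cos_div_sin]
  generalize Real.sin (j * (Real.pi / N) / 2) = t at hs ⊢
  field_simp

/-- The sign `(-1) ^ j` shifts the frequency `m` to `m + N`. -/
lemma sum_odd_cos {N : ℕ} (hN : 0 < N) (m : ℕ) :
    ∑ j ∈ Finset.range N, (1 - (-1) ^ j) * Real.cos (j * (m * (Real.pi / N))) =
      ∑ j ∈ Finset.range N, Real.cos (j * (m * (Real.pi / N))) -
        ∑ j ∈ Finset.range N, Real.cos (j * ((m + N : ℕ) * (Real.pi / N))) := by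
  have hN' : (N : ℝ) ≠ 0 := by exact_mod_cast hN.ne'
  rw [← Finset.sum_sub_distrib]
  refine Finset.sum_congr rfl fun j _ => ?_
  have e : (j : ℝ) * ((m + N : ℕ) * (Real.pi / N)) = j * (m * (Real.pi / N)) + j * Real.pi := by
    push_cast
    field_simp
  rw [e, Real.cos_add_nat_mul_pi]
  ring

/-- The expansion of the constant vector in the sine eigenvectors. -/
lemma sum_cot_sin {N a : ℕ} (h0 : 0 < a) (h1 : a < N) :
    ∑ j ∈ Finset.range N, (1 - (-1) ^ j) * Real.cot (j * (Real.pi / N) / 2) *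
      Real.sin (a * (j * (Real.pi / N))) = N := by
  have hN : 0 < N := by omega
  have step : ∀ a : ℕ,
      ∑ j ∈ Finset.range N, (1 - (-1) ^ j) * Real.cot (j * (Real.pi / N) / 2) *
        Real.sin ((a + 1 : ℕ) * (j * (Real.pi / N))) =
      ∑ j ∈ Finset.range N, (1 - (-1) ^ j) * Real.cot (j * (Real.pi / N) / 2) *
        Real.sin (a * (j * (Real.pi / N))) +
      (∑ j ∈ Finset.range N, (1 - (-1) ^ j) * Real.cos (j * (a * (Real.pi / N))) +
        ∑ j ∈ Finset.range N, (1 - (-1) ^ j) * Real.cos (j * ((a + 1 : ℕ) * (Real.pi / N)))) := by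
    intro a
    rw [← Finset.sum_add_distrib, ← Finset.sum_add_distrib]
    refine Finset.sum_congr rfl fun j hj => ?_
    rcases Nat.eq_zero_or_pos j with rfl | hj0
    · simp
    have hs := (sin_half_pos (N := N) hj0 (by have := Finset.mem_range.1 hj; omega)).ne'
    set y : ℝ := j * (Real.pi / N) / 2 with hy
    set z : ℝ := a * (j * (Real.pi / N)) with hz
    have e1 : ((a + 1 : ℕ) : ℝ) * (j * (Real.pi / N)) = z + 2 * y := by
      rw [hy, hz]; push_cast; ring
    have e2 : (j : ℝ) * (a * (Real.pi / N)) = z := by rw [hz]; ring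
    have e3 : (j : ℝ) * ((a + 1 : ℕ) * (Real.pi / N)) = z + 2 * y := by
      rw [hy, hz]; push_cast; ring
    have key : Real.cot y * Real.sin (z + 2 * y) =
        Real.cot y * Real.sin z + (Real.cos z + Real.cos (z + 2 * y)) := by
      rw [Real.cot_eq_cos_div_sin]
      field_simp
      rw [Real.sin_add, Real.cos_add, Real.sin_two_mul, Real.cos_two_mul]
      linear_combination (2 * Real.cos y * Real.sin z) * Real.sin_sq_add_cos_sq y
    rw [e1, e2, e3]
    linear_combination (1 - (-1) ^ j) * key
  induction a with
  | zero => omega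
  | succ a ih =>
    rw [step, sum_odd_cos hN, sum_odd_cos hN,
      sum_cos_eq (m := a + 1) (by omega) (by omega),
      sum_cos_eq (m := a + 1 + N) (by omega) (by omega),
      sum_cos_eq (m := a + N) (by omega) (by omega)]
    rcases Nat.eq_zero_or_pos a with rfl | ha
    · simp
      ring
    · rw [ih ha (by omega), sum_cos_eq (m := a) ha (by omega)]
      ring

/-- Theorem 2.3 (first form): explicit formula for the number of smooth words. -/
theorem smooth_words_explicit (k n : ℕ) (hk : 1 ≤ k) (hn : 1 ≤ n) :
    (sw n k : ℝ) = (1 / ((k : ℝ) + 1)) * ∑ j ∈ Finset.Icc 1 k,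
      (1 + (-1 : ℝ) ^ (j + 1)) * (Real.cot ((j : ℝ) * Real.pi / (2 * ((k : ℝ) + 1)))) ^ 2 *
        (1 + 2 * Real.cos ((j : ℝ) * Real.pi / ((k : ℝ) + 1))) ^ (n - 1) := by
  classical
  obtain ⟨n, rfl⟩ : ∃ m, n = m + 1 := ⟨n - 1, by omega⟩
  simp only [Nat.add_sub_cancel]
  have hN : (k : ℝ) + 1 ≠ 0 := by positivity
  have hsw : (sw (n + 1) k : ℝ) = smoothSum k n (fun _ => 1) := by
    rw [sw, Nat.card_eq_fintype_card, Fintype.card_subtype]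
    simp [smoothSum]
  have hone : (fun _ : Fin k => (1 : ℝ)) = fun a : Fin k =>
      ∑ j ∈ Finset.Icc 1 k, (1 / ((k : ℝ) + 1) *
        ((1 - (-1) ^ j) * Real.cot (j * (Real.pi / ((k : ℝ) + 1)) / 2))) *
        Real.sin ((((a : ℕ) : ℝ) + 1) * (j * (Real.pi / ((k : ℝ) + 1)))) := by
    funext a
    have h := sum_cot_sin (N := k + 1) (a := a + 1) (by omega) (by omega)
    rw [Finset.range_eq_Ico, Finset.sum_eq_sum_Ico_succ_bot (by omega)] at h
    push_cast at h
    simp only [mul_assoc] at h ⊢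
    rw [← Finset.mul_sum]
    simp only [pow_zero, sub_self, zero_mul, zero_add] at h
    rw [← Finset.Ico_add_one_right_eq_Icc, h]
    field_simp
  have hlin : ∀ (s : Finset ℕ) (c : ℕ → ℝ) (v : ℕ → Fin k → ℝ),
      smoothSum k n (fun a => ∑ j ∈ s, c j * v j a) = ∑ j ∈ s, c j * smoothSum k n (v j) := by
    intro s c v
    simp only [smoothSum, Finset.mul_sum]
    rw [Finset.sum_comm]
    refine Finset.sum_congr rfl fun σ _ => ?_
    split_ifs <;> simp
  rw [hsw, hone, hlin, Finset.mul_sum]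
  refine Finset.sum_congr rfl fun j hj => ?_
  rw [Finset.mem_Icc] at hj
  have hsin : Real.sin (((k : ℝ) + 1) * (j * (Real.pi / ((k : ℝ) + 1)))) = 0 := by
    have e : ((k : ℝ) + 1) * (j * (Real.pi / ((k : ℝ) + 1))) = j * Real.pi := by field_simp
    rw [e, Real.sin_nat_mul_pi]
  rw [smoothSum_eigen k _ _ (sum_neighbours_sin k _ hsin) n]
  have hsum := sum_sin_eq (N := k + 1) (j := j) (by omega) (by omega)
  rw [Finset.sum_range_succ'] at hsum
  push_cast at hsum
  simp only [zero_mul, Real.sin_zero, add_zero] at hsum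
  rw [Fin.sum_univ_eq_sum_range (fun a : ℕ =>
    Real.sin (((a : ℝ) + 1) * (j * (Real.pi / ((k : ℝ) + 1))))), hsum]
  have e1 : (j : ℝ) * Real.pi / (2 * ((k : ℝ) + 1)) = j * (Real.pi / ((k : ℝ) + 1)) / 2 := by
    field_simp
  have e2 : (j : ℝ) * Real.pi / ((k : ℝ) + 1) = j * (Real.pi / ((k : ℝ) + 1)) := by field_simp
  rw [e1, e2, pow_succ]
  have hsq : ((-1 : ℝ) ^ j) ^ 2 = 1 := by rw [← pow_mul, mul_comm, pow_mul]; simp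
  -- `(1 - (-1)^j)² / 2 = 1 - (-1)^j`, since both coefficients vanish for even `j`.
  linear_combination (1 / ((k : ℝ) + 1) * Real.cot (j * (Real.pi / ((k : ℝ) + 1)) / 2) ^ 2 *
    (1 + 2 * Real.cos (j * (Real.pi / ((k : ℝ) + 1)))) ^ n / 2) * hsq
end

section
/- For all integers k ≥ 1 and n ≥ 1, the number of smooth cyclic words of length n over the alphabet [k] satisfies scw_{n,k} = ∑_{j=1}^{k} (1 + 2cos(jπ/(k+1)))^n. -/
/-!
Smooth cyclic words of length `n` over `k` letters are the closed walks of length `n` in the path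
graph on `k` vertices with a loop at each vertex, so their number is the trace of the `n`-th power
of its adjacency matrix (`sum_word_weight`, `scw_succ_eq_trace`). With `θ = jπ / (k + 1)`, the
vector `i ↦ sin (i θ)` is an eigenvector for `1 + 2 cos θ` (`smoothMatrix_mulVec`). These `k`
eigenvalues are distinct because `cos` is injective on `[0, π]`, so the matrix is diagonalizable
and the trace is the sum of the `n`-th powers of the eigenvalues (`trace_smoothMatrix_pow`).
-/

open Real Filter Finset

/-- Transfer-matrix identity: the sum over words `f` of length `m + 1` of the product of the
entries of `M` along `f`, weighted by a function `g` of the two end letters, is read off from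
`M ^ m`. The free weight `g` is what makes the induction on `m` go through. -/
lemma sum_word_weight {α : Type*} [Fintype α] [DecidableEq α] (M : Matrix α α ℝ) (m : ℕ)
    (g : α → α → ℝ) :
    ∑ f : Fin (m + 1) → α,
        (∏ t : Fin m, M (f t.castSucc) (f t.succ)) * g (f 0) (f (Fin.last m)) =
      ∑ i, ∑ j, (M ^ m) i j * g i j := by
  induction m generalizing g with
  | zero =>
    rw [← (Equiv.funUnique (Fin 1) α).symm.sum_comp]
    simp [Matrix.one_apply, Fin.last]
  | succ m ih =>
    rw [← (Fin.consEquiv (fun _ : Fin (m + 2) => α)).sum_comp, Fintype.sum_prod_type]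
    refine Finset.sum_congr rfl fun a _ => ?_
    have h := ih (fun i j => M a i * g a j)
    calc _ = ∑ f : Fin (m + 1) → α, (∏ t : Fin m, M (f t.castSucc) (f t.succ)) *
          (M a (f 0) * g a (f (Fin.last m))) := by
          refine Finset.sum_congr rfl fun f _ => ?_
          rw [Fin.prod_univ_succ]
          simp only [Fin.consEquiv_apply, Fin.castSucc_zero, Fin.cons_zero, Fin.cons_succ,
            ← Fin.succ_last, ← Fin.succ_castSucc]
          ring
      _ = _ := by
          rw [h, Finset.sum_comm]
          refine Finset.sum_congr rfl fun j _ => ?_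
          rw [pow_succ', Matrix.mul_apply, Finset.sum_mul]
          exact Finset.sum_congr rfl fun i _ => by ring

/-- The transfer matrix of smooth words: the adjacency matrix of the path on `k` vertices
with a loop added at each vertex. -/
noncomputable def smoothMatrix (k : ℕ) : Matrix (Fin k) (Fin k) ℝ :=
  Matrix.of fun i j => if |((j : ℕ) : ℤ) - ((i : ℕ) : ℤ)| ≤ 1 then 1 else 0

lemma scw_succ_eq_trace (m k : ℕ) :
    (scw (m + 1) k : ℝ) = (smoothMatrix k ^ (m + 1)).trace := by
  classical
  have h := sum_word_weight (smoothMatrix k) m (fun i j => smoothMatrix k j i)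
  have hr : (smoothMatrix k ^ (m + 1)).trace =
      ∑ i, ∑ j, (smoothMatrix k ^ m) i j * smoothMatrix k j i := by
    simp only [pow_succ, Matrix.trace, Matrix.diag_apply, Matrix.mul_apply]
  rw [hr, ← h, scw, Nat.card_eq_fintype_card, Fintype.card_subtype, Finset.card_filter]
  push_cast
  refine Finset.sum_congr rfl fun f _ => ?_
  simp only [smoothMatrix, Matrix.of_apply]
  rw [Fintype.prod_boole]
  have key : IsSmoothCyclic f ↔
      (∀ t : Fin m, |((f t.succ : ℕ) : ℤ) - ((f t.castSucc : ℕ) : ℤ)| ≤ 1) ∧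
        |((f 0 : ℕ) : ℤ) - ((f (Fin.last m) : ℕ) : ℤ)| ≤ 1 := by
    constructor
    · rintro ⟨h1, h2⟩
      refine ⟨fun t => h1 t (by omega), ?_⟩
      rw [abs_sub_comm]
      exact h2 (by omega)
    · rintro ⟨h1, h2⟩
      exact ⟨fun i hi => h1 ⟨i, by omega⟩, fun _ => by
        rw [abs_sub_comm]; exact h2⟩
  rw [if_congr key rfl rfl, ite_and, ite_mul, one_mul, zero_mul]
  -- the two sides differ only in their `Decidable` instances
  congr

/-- The angle `(l + 1)π / (k + 1)`. -/
noncomputable def pathAngle (k : ℕ) (l : Fin k) : ℝ := ((l : ℝ) + 1) * Real.pi / ((k : ℝ) + 1)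

lemma pathAngle_pos {k : ℕ} (l : Fin k) : 0 < pathAngle k l := by
  unfold pathAngle; positivity

lemma pathAngle_lt_pi {k : ℕ} (l : Fin k) : pathAngle k l < Real.pi := by
  have hl : (l : ℝ) + 1 ≤ k := by exact_mod_cast l.2
  unfold pathAngle
  rw [div_lt_iff₀ (by positivity)]
  nlinarith [Real.pi_pos]

/-- The eigenvalue of `smoothMatrix k` belonging to the angle `pathAngle k l`. -/
noncomputable def smoothEigenvalue (k : ℕ) (l : Fin k) : ℝ := 1 + 2 * Real.cos (pathAngle k l)

/-- The eigenvector of `smoothMatrix k` belonging to the angle `pathAngle k l`; letters of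
`Fin k` are shifted by one, so that the sine vanishes at the virtual letters `0` and `k + 1`. -/
noncomputable def smoothEigenvector (k : ℕ) (l : Fin k) : Fin k → ℝ :=
  fun i => Real.sin (((i : ℕ) + 1 : ℕ) * pathAngle k l)

lemma smoothEigenvalue_injective (k : ℕ) : Function.Injective (smoothEigenvalue k) := by
  intro a b hab
  have hc : Real.cos (pathAngle k a) = Real.cos (pathAngle k b) := by
    unfold smoothEigenvalue at hab; linarith
  have h := Real.injOn_cos ⟨(pathAngle_pos a).le, (pathAngle_lt_pi a).le⟩
    ⟨(pathAngle_pos b).le, (pathAngle_lt_pi b).le⟩ hc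
  unfold pathAngle at h
  have hk : (k : ℝ) + 1 ≠ 0 := by positivity
  field_simp at h
  have h' : (a : ℝ) = b := by linarith
  exact Fin.ext (by exact_mod_cast h')

lemma smoothEigenvector_ne_zero (k : ℕ) (l : Fin k) : smoothEigenvector k l ≠ 0 := by
  intro h
  have h0 := congrFun h ⟨0, l.pos⟩
  simp only [smoothEigenvector, Pi.zero_apply, zero_add, Nat.cast_one, one_mul] at h0
  exact (Real.sin_pos_of_pos_of_lt_pi (pathAngle_pos l) (pathAngle_lt_pi l)).ne' h0

/-- The eigenvalue equation is `sin (p θ) + sin ((p + 2) θ) = 2 cos θ sin ((p + 1) θ)`; at the two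
ends of the path it survives because `sin 0 = sin ((k + 1) θ) = 0`. -/
lemma smoothMatrix_mulVec (k : ℕ) (l : Fin k) :
    (smoothMatrix k).mulVec (smoothEigenvector k l) =
      smoothEigenvalue k l • smoothEigenvector k l := by
  funext i
  set θ := pathAngle k l with hθ
  have hend : Real.sin (((k + 1 : ℕ) : ℝ) * θ) = 0 := by
    have : ((k + 1 : ℕ) : ℝ) * θ = ((l + 1 : ℕ) : ℝ) * Real.pi := by
      rw [hθ, pathAngle]; push_cast; field_simp
    rw [this, Real.sin_nat_mul_pi]
  -- the row sum, extended by the vanishing virtual letters `0` and `k + 1`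
  have hext : ∑ p ∈ Finset.range (k + 2),
      (if |(p : ℤ) - ((i : ℕ) + 1)| ≤ 1 then Real.sin (p * θ) else 0) =
      (smoothMatrix k).mulVec (smoothEigenvector k l) i := by
    rw [Finset.sum_range_succ, Finset.sum_range_succ', hend, Finset.sum_range]
    simp [Matrix.mulVec, dotProduct, smoothMatrix, smoothEigenvector, hθ]
  have hthree : ∑ p ∈ Finset.range (k + 2),
      (if |(p : ℤ) - ((i : ℕ) + 1)| ≤ 1 then Real.sin (p * θ) else 0) =
      ∑ p ∈ Finset.Ico (i : ℕ) (i + 3), Real.sin (p * θ) := by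
    rw [← Finset.sum_filter]
    refine Finset.sum_congr ?_ fun _ _ => rfl
    ext p
    have := i.2
    simp only [Finset.mem_filter, Finset.mem_range, Finset.mem_Ico, abs_le]
    omega
  rw [← hext, hthree, Finset.sum_Ico_eq_sum_range, Nat.add_sub_cancel_left]
  simp only [Finset.sum_range_succ, Finset.sum_range_zero, Pi.smul_apply, smul_eq_mul,
    smoothEigenvalue, smoothEigenvector, ← hθ]
  push_cast
  have e0 : ((i : ℕ) + (0 : ℝ)) * θ = ((i : ℕ) + 1) * θ - θ := by ring
  have e2 : ((i : ℕ) + (2 : ℝ)) * θ = ((i : ℕ) + 1) * θ + θ := by ring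
  rw [e0, e2, Real.sin_sub, Real.sin_add]
  ring

lemma trace_smoothMatrix_pow (k n : ℕ) :
    (smoothMatrix k ^ n).trace = ∑ l, smoothEigenvalue k l ^ n := by
  have hli : LinearIndependent ℝ (smoothEigenvector k) :=
    Module.End.eigenvectors_linearIndependent' (Matrix.toLin' (smoothMatrix k))
      (smoothEigenvalue k) (smoothEigenvalue_injective k) (smoothEigenvector k) fun l =>
      ⟨Module.End.mem_eigenspace_iff.2 (by
        rw [Matrix.toLin'_apply, smoothMatrix_mulVec]), smoothEigenvector_ne_zero k l⟩
  let V : Matrix (Fin k) (Fin k) ℝ := (Matrix.of (smoothEigenvector k)).transpose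
  have hV : IsUnit V := Matrix.linearIndependent_cols_iff_isUnit.1 hli
  obtain ⟨u, hu⟩ := hV
  have hsemi : SemiconjBy V (Matrix.diagonal (smoothEigenvalue k)) (smoothMatrix k) := by
    ext i l
    have h := congrFun (smoothMatrix_mulVec k l) i
    rw [Matrix.mul_diagonal, mul_comm]
    exact h.symm
  have hpow : V * Matrix.diagonal (smoothEigenvalue k) ^ n = smoothMatrix k ^ n * V :=
    (hsemi.pow_right n).eq
  have hconj : smoothMatrix k ^ n =
      u.val * Matrix.diagonal (smoothEigenvalue k) ^ n * u⁻¹.val := by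
    rw [hu, hpow, ← hu, Units.mul_inv_cancel_right]
  rw [hconj, Matrix.trace_units_conj, Matrix.diagonal_pow, Matrix.trace_diagonal]
  rfl

/-- Theorem 3.3: explicit formula for the number of smooth cyclic words. -/
theorem smooth_cyclic_words_explicit (k n : ℕ) (hk : 1 ≤ k) (hn : 1 ≤ n) :
    (scw n k : ℝ) = ∑ j ∈ Finset.Icc 1 k,
      (1 + 2 * Real.cos ((j : ℝ) * Real.pi / ((k : ℝ) + 1))) ^ n := by
  obtain ⟨m, rfl⟩ : ∃ m, n = m + 1 := ⟨n - 1, by omega⟩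
  rw [scw_succ_eq_trace, trace_smoothMatrix_pow, ← Finset.Ico_add_one_right_eq_Icc,
    Finset.sum_Ico_eq_sum_range, Nat.add_sub_cancel, Finset.sum_range]
  refine Finset.sum_congr rfl fun l _ => ?_
  simp only [smoothEigenvalue, pathAngle]
  push_cast
  rw [add_comm (1 : ℝ) (l : ℝ)]
end

section
/- For all integers k ≥ 1 and n ≥ 1, the number sn_{n,k} of smooth necklaces of length n over the alphabet [k], i.e., the number of rotation-equivalence classes of smooth cyclic words of length n over [k], is given by sn_{n,k} = (1/n) · ∑_{i=1}^{k} ∑_{j | n} φ(j) · (1 + 2cos(iπ/(k+1)))^{n/j}, where φ is Euler's totient function and the inner sum runs over positive divisors j of n. -/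
/-! The rotation group `ℤ/n` acts on cyclic smooth words, viewed as maps `ZMod n → Fin k` whose
neighbouring values differ by at most one, and `sn n k` is its number of orbits. A word fixed by
the rotation `r` is the same thing as a cyclic smooth word of length `gcd n r`
(`card_fixedBy`), so Burnside's lemma gives
`n * sn n k = ∑ r, W (gcd n r) = ∑ j ∣ n, φ j * W (n / j)`, where `W d` is the number of cyclic
smooth words of length `d`.

The number `W d` counts closed walks of length `d` on the path with loops, so `W d = tr (A ^ d)`
for the transfer matrix `A` with `1` on the three central diagonals (`card_cycWord`). The vectors
`(sin (jθ))_j` with `θ = iπ / (k + 1)` are eigenvectors of `A` for the distinct eigenvalues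
`1 + 2 cos θ` (`transfer_mulVec_sine`); hence they diagonalize `A` and
`tr (A ^ d) = ∑ i, (1 + 2 cos (iπ / (k + 1))) ^ d` (`trace_transfer_pow`). -/

open Real Filter Finset

namespace SmoothNecklace

/-! ### Rotation of cyclic words and Burnside's lemma -/

/-- Two letters may be neighbours in a smooth word. -/
def Near {k : ℕ} (a b : Fin k) : Prop := |((b : ℕ) : ℤ) - ((a : ℕ) : ℤ)| ≤ 1

instance {k : ℕ} (a b : Fin k) : Decidable (Near a b) := by unfold Near; infer_instance

/-- Smooth cyclic words of length `n`, with positions in `ZMod n`, so that cyclic adjacency is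
a single condition. For `n = 0` these are bi-infinite words. -/
abbrev CycWord (n k : ℕ) : Type := {σ : ZMod n → Fin k // ∀ i, Near (σ i) (σ (i + 1))}

instance (n k : ℕ) [NeZero n] : Finite (CycWord n k) := inferInstance

/-- Rotation of cyclic words. -/
instance (n k : ℕ) : AddAction (ZMod n) (CycWord n k) where
  vadd r σ := ⟨fun i => σ.1 (i + r), fun i => by
    have := σ.2 (i + r)
    rwa [add_right_comm] at this⟩
  zero_vadd σ := Subtype.ext (funext fun i => congrArg σ.1 (add_zero i))
  add_vadd r s σ := Subtype.ext (funext fun i => congrArg σ.1 (by ring))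

lemma vadd_apply {n k : ℕ} (r : ZMod n) (σ : CycWord n k) (i : ZMod n) :
    (r +ᵥ σ).1 i = σ.1 (i + r) := rfl

lemma isSmoothCyclic_iff {m k : ℕ} (σ : Fin (m + 1) → Fin k) :
    IsSmoothCyclic σ ↔ ∀ i : Fin (m + 1), Near (σ i) (σ (i + 1)) := by
  constructor
  · rintro ⟨h1, h2⟩ i
    induction i using Fin.lastCases with
    | last =>
      rw [Fin.last_add_one, Near, abs_sub_comm]
      exact h2 (Nat.succ_pos m)
    | cast i =>
      rw [Fin.coeSucc_eq_succ]
      exact h1 i.1 (Nat.succ_lt_succ i.2)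
  · intro h
    refine ⟨fun i hi => ?_, fun _ => ?_⟩
    · have := h (Fin.castSucc ⟨i, Nat.lt_of_succ_lt_succ hi⟩)
      rwa [Fin.coeSucc_eq_succ] at this
    · have := h (Fin.last m)
      rw [Fin.last_add_one, Near, abs_sub_comm] at this
      exact this

/-- Necklaces are the orbits of the rotation action. -/
lemma sn_eq_card_orbits (m k : ℕ) : sn (m + 1) k =
    Nat.card (Quotient (AddAction.orbitRel (ZMod (m + 1)) (CycWord (m + 1) k))) := by
  unfold sn
  refine Nat.card_congr (Quot.congr
    (Equiv.subtypeEquivRight fun σ => isSmoothCyclic_iff σ) fun σ τ => ?_)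
  constructor
  · rintro ⟨r, hr⟩
    exact ⟨r, Subtype.ext (funext fun i => (hr i).symm)⟩
  · rintro ⟨r, hr⟩
    exact ⟨r, fun i => (congrFun (congrArg Subtype.val hr) i).symm⟩

/-- A cyclic word invariant under rotation by `r` has period `gcd n r`, by Bézout, and so
descends to a cyclic word of that length. -/
lemma card_fixedBy (n k : ℕ) [NeZero n] (r : ZMod n) :
    Nat.card (AddAction.fixedBy (CycWord n k) r) = Nat.card (CycWord (n.gcd r.val) k) := by
  set d := n.gcd r.val with hd
  have hdn : d ∣ n := Nat.gcd_dvd_left _ _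
  let p : ZMod n →+* ZMod d := ZMod.castHom hdn (ZMod d)
  have hps : Function.Surjective p := ZMod.castHom_surjective hdn
  have hr : p r = 0 := by
    rw [← ZMod.natCast_zmod_val r, map_natCast, ZMod.natCast_eq_zero_iff]
    exact Nat.gcd_dvd_right _ _
  have key : ∀ a b : ZMod n, p a = p b → ∃ c : ℤ, a = b + c • r := by
    intro a b hab
    obtain ⟨a, rfl⟩ := ZMod.intCast_surjective a
    obtain ⟨b, rfl⟩ := ZMod.intCast_surjective b
    rw [map_intCast, map_intCast, ZMod.intCast_eq_intCast_iff_dvd_sub] at hab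
    obtain ⟨q, hq⟩ := hab
    refine ⟨-(q * n.gcdB r.val), ?_⟩
    have hbez := Nat.gcd_eq_gcd_ab n r.val
    rw [← hd] at hbez
    have h2 : (a : ℤ) = b - (n * n.gcdA r.val + r.val * n.gcdB r.val) * q := by
      rw [← hbez, ← hq]; ring
    have h3 := congrArg (Int.cast : ℤ → ZMod n) h2
    push_cast at h3
    rw [h3]
    simp only [ZMod.natCast_self, ZMod.natCast_val, ZMod.cast_id', id, zsmul_eq_mul]
    push_cast
    ring
  symm
  refine Nat.card_congr (Equiv.ofBijective (fun τ : CycWord d k =>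
    (⟨⟨fun i => τ.1 (p i), fun i => ?_⟩, ?_⟩ : AddAction.fixedBy (CycWord n k) r)) ⟨?_, ?_⟩)
  · dsimp only
    rw [map_add, map_one]
    exact τ.2 _
  · refine Subtype.ext (funext fun i => ?_)
    change τ.1 (p (i + r)) = τ.1 (p i)
    rw [map_add, hr, add_zero]
  · intro τ τ' h
    refine Subtype.ext (funext fun i => ?_)
    obtain ⟨i, rfl⟩ := hps i
    exact congrFun (congrArg (fun x => x.1.1) h) i
  · rintro ⟨σ, hσ⟩
    have hper : ∀ i, σ.1 (i + r) = σ.1 i := fun i => congrFun (congrArg Subtype.val hσ) i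
    have hc : ∀ a b, p a = p b → σ.1 a = σ.1 b := by
      intro a b hab
      obtain ⟨c, rfl⟩ := key a b hab
      exact (Function.Periodic.zsmul (f := σ.1) hper c) b
    have hs : ∀ a, σ.1 (Function.surjInv hps (p a)) = σ.1 a :=
      fun a => hc _ _ (Function.surjInv_eq hps _)
    refine ⟨⟨fun i => σ.1 (Function.surjInv hps i), fun i => ?_⟩, ?_⟩
    · obtain ⟨i, rfl⟩ := hps i
      dsimp only
      rw [← map_one p, ← map_add, hs, hs]
      exact σ.2 i
    · exact Subtype.ext (Subtype.ext (funext hs))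

lemma sum_gcd (n : ℕ) [NeZero n] (F : ℕ → ℕ) :
    ∑ r : ZMod n, F (n.gcd r.val) = ∑ j ∈ n.divisors, Nat.totient j * F (n / j) := by
  have hn : n ≠ 0 := NeZero.ne n
  have h1 : ∑ r : ZMod n, F (n.gcd r.val) = ∑ r ∈ Finset.range n, F (n.gcd r) := by
    refine Finset.sum_bij (fun r _ => r.val) (fun r _ => Finset.mem_range.2 r.val_lt)
      (fun a _ b _ h => ZMod.val_injective n h) (fun b hb => ?_) (fun _ _ => rfl)
    exact ⟨b, Finset.mem_univ _, ZMod.val_cast_of_lt (Finset.mem_range.1 hb)⟩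
  rw [h1, ← Finset.sum_fiberwise_of_maps_to (t := n.divisors) (g := fun r => n.gcd r)
    (fun r _ => Nat.mem_divisors.2 ⟨Nat.gcd_dvd_left _ _, hn⟩),
    ← Nat.sum_div_divisors n (fun j => Nat.totient j * F (n / j))]
  refine Finset.sum_congr rfl fun d hd => ?_
  have hdn := Nat.dvd_of_mem_divisors hd
  rw [Nat.totient_div_of_dvd hdn, Nat.div_div_self hdn hn,
    Finset.sum_congr rfl (g := fun _ => F d) (fun r hr => by rw [(Finset.mem_filter.1 hr).2]),
    Finset.sum_const, smul_eq_mul]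

/-- Burnside's lemma for the rotation action. -/
lemma burnside (m k : ℕ) : sn (m + 1) k * (m + 1) =
    ∑ j ∈ (m + 1).divisors, Nat.totient j * Nat.card (CycWord ((m + 1) / j) k) := by
  classical
  rw [← sum_gcd (m + 1) (fun d => Nat.card (CycWord d k)), sn_eq_card_orbits]
  let := Fintype.ofFinite (CycWord (m + 1) k)
  let : ∀ g : ZMod (m + 1), Fintype (AddAction.fixedBy (CycWord (m + 1) k) g) :=
    fun g => Fintype.ofFinite _
  let := Fintype.ofFinite (Quotient (AddAction.orbitRel (ZMod (m + 1)) (CycWord (m + 1) k)))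
  have h := AddAction.sum_card_fixedBy_eq_card_orbits_mul_card_addGroup
    (ZMod (m + 1)) (CycWord (m + 1) k)
  rw [ZMod.card] at h
  rw [Nat.card_eq_fintype_card, ← h]
  refine Finset.sum_congr rfl fun r _ => ?_
  rw [← Nat.card_eq_fintype_card, card_fixedBy]

/-! ### Counting cyclic words by closed walks -/

/-- The transfer matrix of smooth words. -/
def transfer (k : ℕ) : Matrix (Fin k) (Fin k) ℝ := fun a b => if Near a b then 1 else 0

/-- Expansion of `tr (A ^ m * B)` over closed walks; `B` plays the role of the closing step,
which makes the induction work by cyclicity of the trace. -/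
lemma trace_pow_mul {k : ℕ} (A : Matrix (Fin k) (Fin k) ℝ) (m : ℕ) :
    ∀ B : Matrix (Fin k) (Fin k) ℝ, (A ^ m * B).trace =
      ∑ f : Fin (m + 1) → Fin k,
        (∏ i : Fin m, A (f i.castSucc) (f i.succ)) * B (f (Fin.last m)) (f 0) := by
  induction m with
  | zero =>
    intro B
    rw [← (Equiv.funUnique (Fin 1) (Fin k)).symm.sum_comp]
    simp [Matrix.trace]
  | succ m ih =>
    intro B
    rw [← (Fin.consEquiv fun _ => Fin k).sum_comp, Fintype.sum_prod_type_right, pow_succ',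
      Matrix.mul_assoc, Matrix.trace_mul_comm, Matrix.mul_assoc, ih]
    refine Finset.sum_congr rfl fun g _ => ?_
    rw [Matrix.mul_apply, Finset.mul_sum]
    refine Finset.sum_congr rfl fun a _ => ?_
    simp only [Fin.consEquiv, Equiv.coe_fn_mk, Fin.prod_univ_succ, Fin.castSucc_zero,
      Fin.cons_zero, Fin.cons_succ, ← Fin.succ_castSucc, ← Fin.succ_last]
    ring

lemma card_cycWord (m k : ℕ) :
    (Nat.card (CycWord (m + 1) k) : ℝ) = (transfer k ^ (m + 1)).trace := by
  classical
  rw [pow_succ, trace_pow_mul]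
  change (Nat.card {σ : Fin (m + 1) → Fin k // ∀ i, Near (σ i) (σ (i + 1))} : ℝ) = _
  rw [Nat.card_eq_fintype_card, Fintype.card_subtype, Finset.card_filter, Nat.cast_sum]
  refine Finset.sum_congr rfl fun f _ => ?_
  simp only [transfer, Finset.prod_ite_zero, Finset.prod_const_one]
  simp only [Fin.forall_fin_succ', Fin.coeSucc_eq_succ, Fin.last_add_one, Finset.mem_univ,
    true_imp_iff]
  split_ifs <;> simp_all

/-! ### Diagonalization of the transfer matrix -/

/-- The angle `iπ / (k + 1)`, for `i` shifted to be `1`-based. -/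
noncomputable def angle (k : ℕ) (i : Fin k) : ℝ := ((i + 1 : ℕ) : ℝ) * Real.pi / ((k : ℝ) + 1)

lemma angle_pos {k : ℕ} (i : Fin k) : 0 < angle k i := by
  unfold angle; positivity

lemma angle_lt_pi {k : ℕ} (i : Fin k) : angle k i < Real.pi := by
  unfold angle
  rw [div_lt_iff₀ (by positivity), mul_comm]
  have : ((i + 1 : ℕ) : ℝ) < (k : ℝ) + 1 := by exact_mod_cast Nat.succ_lt_succ i.2
  exact mul_lt_mul_of_pos_left this Real.pi_pos

lemma angle_injective (k : ℕ) : Function.Injective (angle k) := by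
  intro i j h
  unfold angle at h
  have hk : (k : ℝ) + 1 ≠ 0 := by positivity
  rw [div_left_inj' hk, mul_left_inj' Real.pi_ne_zero] at h
  have : (i : ℕ) + 1 = j + 1 := by exact_mod_cast h
  exact Fin.ext (by omega)

/-- The eigenvalue `1 + 2 cos (iπ / (k + 1))` of the transfer matrix. -/
noncomputable def eig (k : ℕ) (i : Fin k) : ℝ := 1 + 2 * Real.cos (angle k i)

/-- The eigenvector with entries `sin (jθ)`, `1 ≤ j ≤ k`. -/
noncomputable def sine (k : ℕ) (i : Fin k) : Fin k → ℝ :=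
  fun j => Real.sin (((j + 1 : ℕ) : ℝ) * angle k i)

lemma eig_injective (k : ℕ) : Function.Injective (eig k) := by
  intro i j h
  unfold eig at h
  refine angle_injective k (Real.injOn_cos ⟨(angle_pos i).le, (angle_lt_pi i).le⟩
    ⟨(angle_pos j).le, (angle_lt_pi j).le⟩ (by linarith))

/-- If `g` vanishes at the virtual letters `0` and `k + 1`, the transfer matrix sums `g` over
the three letters around `j`, with no boundary correction. -/
lemma sum_near {k : ℕ} (g : ℕ → ℝ) (h0 : g 0 = 0) (hk : g (k + 1) = 0) (j : Fin k) :
    ∑ l : Fin k, (if Near j l then 1 else 0) * g (l + 1) = g j + g (j + 1) + g (j + 2) := by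
  have h1 : ∑ l : Fin k, (if Near j l then 1 else 0) * g (l + 1) =
      ∑ l ∈ Finset.range k, if l ≤ j + 1 ∧ (j : ℕ) ≤ l + 1 then g (l + 1) else 0 := by
    rw [← Fin.sum_univ_eq_sum_range
      (fun l => if l ≤ j + 1 ∧ (j : ℕ) ≤ l + 1 then g (l + 1) else 0)]
    refine Finset.sum_congr rfl fun l _ => ?_
    have : Near j l ↔ (l : ℕ) ≤ j + 1 ∧ (j : ℕ) ≤ l + 1 := by
      unfold Near; rw [abs_le]; omega
    simp [this]
  have h2 : ∑ l ∈ Finset.range (k + 2), (if l ≤ (j : ℕ) + 2 ∧ (j : ℕ) ≤ l then g l else 0) =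
      ∑ l ∈ Finset.range k, if l ≤ j + 1 ∧ (j : ℕ) ≤ l + 1 then g (l + 1) else 0 := by
    rw [Finset.sum_range_succ, Finset.sum_range_succ']
    simp [h0, hk]
  have h3 : (Finset.range (k + 2)).filter (fun l => l ≤ (j : ℕ) + 2 ∧ (j : ℕ) ≤ l) =
      {(j : ℕ), (j : ℕ) + 1, (j : ℕ) + 2} := by
    ext l
    have := j.2
    simp only [Finset.mem_filter, Finset.mem_range, Finset.mem_insert, Finset.mem_singleton]
    omega
  rw [h1, ← h2, ← Finset.sum_filter, h3, Finset.sum_insert (by simp), Finset.sum_insert (by simp),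
    Finset.sum_singleton, add_assoc]

lemma transfer_mulVec_sine (k : ℕ) (i : Fin k) :
    (transfer k).mulVec (sine k i) = eig k i • sine k i := by
  ext j
  have hk : Real.sin (((k + 1 : ℕ) : ℝ) * angle k i) = 0 := by
    have : ((k + 1 : ℕ) : ℝ) * angle k i = ((i + 1 : ℕ) : ℝ) * Real.pi := by
      unfold angle; push_cast; field_simp
    rw [this, Real.sin_nat_mul_pi]
  have h := sum_near (fun l => Real.sin ((l : ℝ) * angle k i)) (by simp) hk j
  simp only [Matrix.mulVec, dotProduct, transfer, sine, Pi.smul_apply, smul_eq_mul]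
  rw [h]
  -- The outer two terms combine by `sin (x - θ) + sin (x + θ) = 2 sin x cos θ`.
  have e1 : ((j : ℕ) : ℝ) * angle k i = ((j + 1 : ℕ) : ℝ) * angle k i - angle k i := by
    push_cast; ring
  have e2 : ((j + 2 : ℕ) : ℝ) * angle k i = ((j + 1 : ℕ) : ℝ) * angle k i + angle k i := by
    push_cast; ring
  rw [e1, e2, Real.sin_sub, Real.sin_add, eig]
  ring

lemma sine_ne_zero (k : ℕ) (i : Fin k) : sine k i ≠ 0 := by
  intro h
  have := congrFun h ⟨0, i.pos⟩
  simp only [sine, Pi.zero_apply, zero_add, Nat.cast_one, one_mul] at this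
  exact (Real.sin_pos_of_pos_of_lt_pi (angle_pos i) (angle_lt_pi i)).ne' this

/-- Eigenvectors for distinct eigenvalues are independent, so the sine vectors diagonalize the
transfer matrix. -/
lemma trace_transfer_pow (k d : ℕ) : (transfer k ^ d).trace = ∑ i : Fin k, eig k i ^ d := by
  have hli : LinearIndependent ℝ (sine k) :=
    Module.End.eigenvectors_linearIndependent' (Matrix.toLin' (transfer k)) (eig k)
      (eig_injective k) (sine k) fun i => ⟨by
        rw [Module.End.mem_eigenspace_iff, Matrix.toLin'_apply, transfer_mulVec_sine],
        sine_ne_zero k i⟩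
  let S : Matrix (Fin k) (Fin k) ℝ := fun j i => sine k i j
  have hS : IsUnit S := Matrix.linearIndependent_cols_iff_isUnit.1 hli
  have hAS : transfer k * S = S * Matrix.diagonal (eig k) := by
    ext j i
    rw [Matrix.mul_diagonal]
    have := congrFun (transfer_mulVec_sine k i) j
    rw [Pi.smul_apply, smul_eq_mul, mul_comm] at this
    exact this
  have hpow : transfer k ^ d * S = S * Matrix.diagonal (eig k) ^ d := by
    have : SemiconjBy S (Matrix.diagonal (eig k)) (transfer k) := hAS.symm
    exact (this.pow_right d).symm
  have hdet : IsUnit S.det := (Matrix.isUnit_iff_isUnit_det S).1 hS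
  have hA : transfer k ^ d = S * (Matrix.diagonal (eig k) ^ d * S⁻¹) := by
    rw [← Matrix.mul_assoc, ← hpow, Matrix.mul_assoc, Matrix.mul_nonsing_inv S hdet,
      Matrix.mul_one]
  rw [hA, Matrix.trace_mul_comm, Matrix.mul_assoc, Matrix.nonsing_inv_mul S hdet,
    Matrix.mul_one, Matrix.diagonal_pow, Matrix.trace_diagonal]
  rfl

lemma sum_eig (k d : ℕ) : ∑ i : Fin k, eig k i ^ d = ∑ i ∈ Finset.Icc 1 k,
    (1 + 2 * Real.cos ((i : ℝ) * Real.pi / ((k : ℝ) + 1))) ^ d := by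
  rw [← Finset.Ico_add_one_right_eq_Icc, Finset.sum_Ico_eq_sum_range, Nat.add_sub_cancel,
    ← Fin.sum_univ_eq_sum_range
      (fun i => (1 + 2 * Real.cos (((1 + i : ℕ) : ℝ) * Real.pi / ((k : ℝ) + 1))) ^ d)]
  refine Finset.sum_congr rfl fun i _ => ?_
  rw [eig, angle, add_comm 1 (i : ℕ)]

end SmoothNecklace

/-- Theorem 4.1: explicit formula for the number of smooth necklaces. -/
theorem smooth_necklaces_explicit (k n : ℕ) (hk : 1 ≤ k) (hn : 1 ≤ n) :
    (sn n k : ℝ) = (1 / (n : ℝ)) * ∑ i ∈ Finset.Icc 1 k, ∑ j ∈ n.divisors,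
      (Nat.totient j : ℝ) *
        (1 + 2 * Real.cos ((i : ℝ) * Real.pi / ((k : ℝ) + 1))) ^ (n / j) := by
  obtain ⟨m, rfl⟩ : ∃ m, n = m + 1 := ⟨n - 1, by omega⟩
  have hb := congrArg (Nat.cast : ℕ → ℝ) (SmoothNecklace.burnside m k)
  push_cast at hb
  rw [Finset.sum_comm, one_div, eq_inv_mul_iff_mul_eq₀ (by positivity), mul_comm]
  push_cast
  rw [hb]
  refine Finset.sum_congr rfl fun j hj => ?_
  -- Divisors of a positive number have positive cofactor, so the closed-walk count applies.
  obtain ⟨e, he⟩ : ∃ e, (m + 1) / j = e + 1 :=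
    Nat.exists_eq_succ_of_ne_zero (Nat.div_pos (Nat.divisor_le hj) (Nat.pos_of_mem_divisors hj)).ne'
  rw [he, SmoothNecklace.card_cycWord, SmoothNecklace.trace_transfer_pow, SmoothNecklace.sum_eig,
    Finset.mul_sum]
end

section
/- Let k ≥ 1 be an integer and let x be a real number with 0 < x < 1/3, and set t = (1−x)/(2x). Then the series ∑_{n=0}^{∞} scw_{n,k} xⁿ converges and equals 1 + kx(1+3x)/((1+x)(1−3x)) − (2(k+1)x/((1+x)(1−3x))) · U_{k−1}(t)/U_k(t). -/
/-! Smooth cyclic words of length `n ≥ 1` are the closed walks of length `n` on the path with `k`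
vertices and a loop at each vertex, so they are counted by the trace of `A ^ n`, where `A` is the
tridiagonal matrix of ones (`scw_succ`). The maximal row sum of `A` is at most `3`, hence for
`0 < x < 1 / 3` the Neumann series `∑ xⁿ Aⁿ` converges to `(1 - x A)⁻¹` (`hasSum_trace`). With
`t = (1 - x) / (2 x)`, solving the three-term recurrence with zero boundary values gives this
inverse explicitly as the Green's function `U_{min} U_{k-1-max} / (x U_k)`
(`one_sub_mul_resolvent`). Its trace is the convolution `∑ U_i U_{k-1-i}` divided by `x U_k`, and
`2 (t² - 1) ∑ U_i U_{k-1-i} = k t U_k - (k + 1) U_{k-1}` (`Ueval_conv`). The length-zero term is `1`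
rather than the trace `k` of the identity, which accounts for the remaining correction. -/


open Real Filter Finset

/-- The transfer matrix of smooth words: entry `1` where two letters may be adjacent, `0` elsewhere. -/
def smoothMat (k : ℕ) : Matrix (Fin k) (Fin k) ℝ :=
  Matrix.of fun i j => if |((j : ℕ) : ℤ) - ((i : ℕ) : ℤ)| ≤ 1 then 1 else 0

/-- The resolvent `(1 - x A)⁻¹` of the transfer matrix in closed form, where `t = (1 - x) / (2 x)`:
the entry is `U_{min} U_{k-1-max} / (x U_k)` for indices counted from `0`. -/
noncomputable def smoothResolvent (k : ℕ) (x t : ℝ) : Matrix (Fin k) (Fin k) ℝ :=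
  Matrix.of fun i j =>
    (if (i : ℕ) ≤ (j : ℕ) then Ueval (i : ℕ) t * Ueval ((k : ℤ) - 1 - (j : ℕ)) t
      else Ueval (j : ℕ) t * Ueval ((k : ℤ) - 1 - (i : ℕ)) t) / (x * Ueval k t)

/-! ### Smooth cyclic words as closed walks -/

/-- Summing any function of the endpoints over all weighted walks of length `n` is the same as
weighting it with the entries of the `n`-th power of the matrix. -/
lemma sum_walks {k : ℕ} (A : Matrix (Fin k) (Fin k) ℝ) (n : ℕ) :
    ∀ f : Fin k → Fin k → ℝ,
    ∑ σ : Fin (n + 1) → Fin k, (∏ m : Fin n, A (σ m.castSucc) (σ m.succ)) * f (σ 0) (σ (Fin.last n))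
      = ∑ i, ∑ j, (A ^ n) i j * f i j := by
  induction n with
  | zero =>
    intro f
    rw [← (Equiv.funUnique (Fin 1) (Fin k)).symm.sum_comp]
    simp [Matrix.one_apply]
  | succ n ih =>
    intro f
    rw [← (Fin.snocEquiv (fun _ => Fin k)).sum_comp, Fintype.sum_prod_type, Finset.sum_comm]
    have h := ih (fun a b => ∑ c, A b c * f a c)
    have h1 : ∀ σ : Fin (n + 1) → Fin k, ∀ c : Fin k,
        (∏ m : Fin (n + 1), A ((Fin.snoc σ c : Fin (n + 2) → Fin k) m.castSucc)
          ((Fin.snoc σ c : Fin (n + 2) → Fin k) m.succ)) *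
          f ((Fin.snoc σ c : Fin (n + 2) → Fin k) 0)
            ((Fin.snoc σ c : Fin (n + 2) → Fin k) (Fin.last (n + 1)))
        = (∏ m : Fin n, A (σ m.castSucc) (σ m.succ)) *
          (A (σ (Fin.last n)) c * f (σ 0) c) := by
      intro σ c
      have h0 : (Fin.snoc σ c : Fin (n + 2) → Fin k) 0 = σ 0 :=
        Fin.snoc_castSucc (α := fun _ => Fin k) c σ 0
      rw [Fin.prod_univ_castSucc, h0, Fin.snoc_last]
      simp only [Fin.succ_last, Fin.snoc_last, Fin.snoc_castSucc, ← Fin.castSucc_succ]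
      ring
    simp only [Fin.snocEquiv_apply, h1]
    simp only [← Finset.mul_sum]
    rw [h]
    simp only [pow_succ, Matrix.mul_apply, Finset.mul_sum, Finset.sum_mul]
    refine Finset.sum_congr rfl fun i _ => ?_
    rw [Finset.sum_comm]
    refine Finset.sum_congr rfl fun j _ => Finset.sum_congr rfl fun c _ => by ring

lemma scw_succ (n k : ℕ) : (scw (n + 1) k : ℝ) = (smoothMat k ^ (n + 1)).trace := by
  classical
  have hw := sum_walks (smoothMat k) n (fun i j => smoothMat k j i)
  have hR : ∑ i, ∑ j, (smoothMat k ^ n) i j * smoothMat k j i = (smoothMat k ^ (n + 1)).trace := by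
    simp [pow_succ, Matrix.trace, Matrix.mul_apply]
  rw [← hR, ← hw, scw, Nat.card_eq_fintype_card, Fintype.card_subtype, Finset.card_filter]
  push_cast
  refine Finset.sum_congr rfl fun σ _ => ?_
  have hp : (∏ m : Fin n, smoothMat k (σ m.castSucc) (σ m.succ)) = if IsSmooth σ then 1 else 0 := by
    simp only [smoothMat, Matrix.of_apply]
    rw [Finset.prod_boole]
    congr 1
    refine propext ⟨fun h i hi => ?_, fun h m _ => ?_⟩
    · exact h ⟨i, by omega⟩ (Finset.mem_univ _)
    · exact h m (by omega)
  have hc : smoothMat k (σ (Fin.last n)) (σ 0) =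
      if (∀ h : 0 < n + 1, |((σ ⟨n + 1 - 1, Nat.sub_lt h Nat.one_pos⟩ : ℕ) : ℤ)
        - ((σ ⟨0, h⟩ : ℕ) : ℤ)| ≤ 1) then 1 else 0 := by
    simp only [smoothMat, Matrix.of_apply]
    congr 1
    rw [abs_sub_comm]
    exact propext ⟨fun h _ => h, fun h => h (by omega)⟩
  rw [hp, hc]
  by_cases hs : IsSmooth σ
  · simp only [IsSmoothCyclic, hs, true_and, if_true, one_mul]
  · simp only [IsSmoothCyclic, hs, false_and, if_false, zero_mul]

/-! ### Chebyshev identities -/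

lemma Ueval_rec (t : ℝ) (n : ℤ) : Ueval (n + 1) t = 2 * t * Ueval n t - Ueval (n - 1) t := by
  have h := Polynomial.Chebyshev.U_add_two ℝ (n - 1)
  rw [show n - 1 + 2 = n + 1 by ring, show n - 1 + 1 = n by ring] at h
  simp [Ueval, h]

lemma Ueval_neg_one (t : ℝ) : Ueval (-1) t = 0 := by simp [Ueval]

lemma Ueval_zero (t : ℝ) : Ueval 0 t = 1 := by simp [Ueval]

lemma Ueval_pos {t : ℝ} (ht : 1 < t) (n : ℕ) : 0 < Ueval n t := by
  have h : 0 < Ueval n t ∧ Ueval ((n : ℤ) - 1) t < Ueval n t := by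
    induction n with
    | zero => simp [Ueval_neg_one, Ueval_zero]
    | succ n ih =>
      obtain ⟨h1, h2⟩ := ih
      have h3 : Ueval n t < Ueval ((n : ℤ) + 1) t := by rw [Ueval_rec]; nlinarith
      push_cast
      rw [add_sub_cancel_right]
      exact ⟨h1.trans h3, h3⟩
  exact h.1

lemma Ueval_add (t : ℝ) (k : ℤ) (n : ℕ) :
    Ueval n t * Ueval (k - n) t - Ueval ((n : ℤ) - 1) t * Ueval (k - 1 - n) t = Ueval k t := by
  induction n with
  | zero => simp [Ueval_neg_one, Ueval_zero]
  | succ n ih =>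
    have h1 := Ueval_rec t n
    have h2 := Ueval_rec t (k - 1 - n)
    rw [show k - 1 - n + 1 = k - n by ring] at h2
    push_cast
    rw [add_sub_cancel_right, show k - (n + 1 : ℤ) = k - 1 - n by ring,
      show k - 1 - (n + 1 : ℤ) = k - 1 - n - 1 by ring, h1]
    rw [h2] at ih
    linear_combination ih

/-- The self-convolution of the Chebyshev polynomials, up to the factor `2 (t² - 1)`. -/
lemma Ueval_conv (t : ℝ) (k : ℕ) :
    2 * (t ^ 2 - 1) * ∑ i ∈ Finset.range k, Ueval i t * Ueval ((k : ℤ) - 1 - i) t =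
      k * t * Ueval k t - (k + 1) * Ueval ((k : ℤ) - 1) t := by
  induction k using Nat.twoStepInduction with
  | zero => simp [Ueval_neg_one]
  | one =>
    have := Ueval_rec t 0
    simp [Ueval_neg_one, Ueval_zero] at this ⊢
    rw [this]; ring
  | more k ih0 ih1 =>
    have hs : ∑ i ∈ Finset.range (k + 2), Ueval i t * Ueval (((k + 2 : ℕ) : ℤ) - 1 - i) t
        = 2 * t * ∑ i ∈ Finset.range (k + 1), Ueval i t * Ueval (((k + 1 : ℕ) : ℤ) - 1 - i) t
          - ∑ i ∈ Finset.range k, Ueval i t * Ueval ((k : ℤ) - 1 - i) t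
          + Ueval ((k : ℤ) + 1) t := by
      have hi : ∀ i ∈ Finset.range (k + 1),
          Ueval i t * Ueval (((k + 2 : ℕ) : ℤ) - 1 - i) t =
          2 * t * (Ueval i t * Ueval (((k + 1 : ℕ) : ℤ) - 1 - i) t)
            - Ueval i t * Ueval ((k : ℤ) - 1 - i) t := by
        intro i _
        have := Ueval_rec t ((k : ℤ) - i)
        push_cast
        rw [show (k : ℤ) + 2 - 1 - i = k - i + 1 by ring, this,
          show (k : ℤ) + 1 - 1 - i = k - i by ring, show (k : ℤ) - i - 1 = k - 1 - i by ring]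
        ring
      rw [Finset.sum_range_succ, Finset.sum_congr rfl hi, Finset.sum_sub_distrib, ← Finset.mul_sum,
        Finset.sum_range_succ (fun i : ℕ => Ueval i t * Ueval ((k : ℤ) - 1 - i) t) k]
      push_cast
      rw [show (k : ℤ) - 1 - k = -1 by ring, show (k : ℤ) + 2 - 1 - (k + 1) = 0 by ring,
        Ueval_neg_one, Ueval_zero]
      ring
    rw [hs]
    have h1 := Ueval_rec t k
    have h2 := Ueval_rec t ((k : ℤ) + 1)
    push_cast at ih1 ⊢
    rw [show (k : ℤ) + 1 + 1 = k + 2 by ring, show (k : ℤ) + 1 - 1 = k by ring] at h2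
    rw [show (k : ℤ) + 1 - 1 = k by ring] at ih1
    rw [show (k : ℤ) + 2 - 1 = k + 1 by ring, h2]
    simp only [show ∀ i : ℤ, (k : ℤ) + 1 - 1 - i = k - i from fun i => by ring] at ih1 ⊢
    linear_combination 2 * t * ih1 - ih0 + ((k : ℝ) + 1) * h1

/-! ### The resolvent -/

lemma sum_ite_eq_int {k : ℕ} (h : ℤ → ℝ) (h0 : h (-1) = 0) (hk : h k = 0) (a : ℤ)
    (ha0 : -1 ≤ a) (hak : a ≤ k) :
    ∑ m : Fin k, (if ((m : ℕ) : ℤ) = a then h (m : ℕ) else 0) = h a := by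
  by_cases hm : 0 ≤ a ∧ a < k
  · obtain ⟨n, rfl⟩ := Int.eq_ofNat_of_zero_le hm.1
    rw [Finset.sum_eq_single ⟨n, by omega⟩]
    · simp
    · intro b _ hb
      exact if_neg fun hh => hb (Fin.ext (by exact_mod_cast hh))
    · simp
  · have ha : h a = 0 := by
      rcases (by omega : a = -1 ∨ a = k) with rfl | rfl <;> assumption
    rw [ha]
    exact Finset.sum_eq_zero fun m _ => if_neg (by omega)

lemma smoothMat_apply_mul {k : ℕ} (i m : Fin k) (c : ℝ) :
    smoothMat k i m * c = (if ((m : ℕ) : ℤ) = (i : ℕ) - 1 then c else 0)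
      + (if ((m : ℕ) : ℤ) = (i : ℕ) then c else 0)
      + (if ((m : ℕ) : ℤ) = (i : ℕ) + 1 then c else 0) := by
  simp only [smoothMat, Matrix.of_apply, abs_le]
  split_ifs <;> first | omega | simp

/-- With zero boundary values at `-1` and `k`, the transfer matrix adds up three neighbours. -/
lemma smoothMat_mulVec {k : ℕ} (h : ℤ → ℝ) (h0 : h (-1) = 0) (hk : h k = 0) (i : Fin k) :
    ∑ m : Fin k, smoothMat k i m * h (m : ℕ) =
      h ((i : ℕ) - 1) + h (i : ℕ) + h ((i : ℕ) + 1) := by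
  simp only [smoothMat_apply_mul, Finset.sum_add_distrib]
  rw [sum_ite_eq_int h h0 hk _ (by omega) (by omega),
    sum_ite_eq_int h h0 hk _ (by omega) (by omega), sum_ite_eq_int h h0 hk _ (by omega) (by omega)]

lemma one_sub_mul_resolvent {k : ℕ} {x t : ℝ} (hx : x ≠ 0) (ht : 1 - x = x * (2 * t))
    (hU : Ueval k t ≠ 0) :
    (1 - x • smoothMat k) * smoothResolvent k x t = 1 := by
  ext i j
  -- `h` extends column `j` of the resolvent to integer rows; it vanishes at rows `-1` and `k`.
  let h : ℤ → ℝ := fun m =>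
    (if m ≤ (j : ℕ) then Ueval m t * Ueval ((k : ℤ) - 1 - (j : ℕ)) t
      else Ueval (j : ℕ) t * Ueval ((k : ℤ) - 1 - m) t) / (x * Ueval k t)
  have hj := j.2
  have hR : ∀ m : Fin k, smoothResolvent k x t m j = h (m : ℕ) := fun m => by
    simp [smoothResolvent, h]
  have h0 : h (-1) = 0 := by simp [h, Ueval_neg_one]
  have hk : h k = 0 := by
    have : ¬ (k : ℤ) ≤ (j : ℕ) := by omega
    simp only [h, if_neg this]
    rw [show (k : ℤ) - 1 - k = -1 by ring, Ueval_neg_one]; simp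
  rw [sub_mul, one_mul, Matrix.sub_apply, Matrix.smul_mul, Matrix.smul_apply, Matrix.mul_apply]
  simp only [hR, smul_eq_mul]
  rw [smoothMat_mulVec h h0 hk, Matrix.one_apply]
  have key : x * (2 * t * h (i : ℕ) - h ((i : ℕ) - 1) - h ((i : ℕ) + 1)) =
      if i = j then 1 else 0 := by
    rcases lt_trichotomy (i : ℕ) (j : ℕ) with hij | hij | hij
    · rw [if_neg (fun e => by simp [e] at hij)]
      simp only [h]
      rw [if_pos (by omega), if_pos (by omega), if_pos (by omega), Ueval_rec t (i : ℕ)]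
      ring
    · rw [if_pos (Fin.ext hij)]
      simp only [h]
      rw [if_pos (by omega), if_pos (by omega), if_neg (by omega), hij]
      have e1 := Ueval_add t k (j : ℕ)
      have e2 := Ueval_rec t ((k : ℤ) - 1 - (j : ℕ))
      rw [show (k : ℤ) - 1 - (j : ℕ) + 1 = k - (j : ℕ) by ring] at e2
      rw [show (k : ℤ) - 1 - ((j : ℕ) + 1) = k - 1 - (j : ℕ) - 1 by ring]
      rw [e2] at e1
      field_simp
      linear_combination e1
    · rw [if_neg (fun e => by simp [e] at hij)]
      have e2 := Ueval_rec t ((k : ℤ) - 1 - (i : ℕ))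
      -- For `i - 1 = j` the row lies on the diagonal, where both branches of `h` agree.
      have hb : h ((i : ℕ) - 1) = Ueval (j : ℕ) t * Ueval ((k : ℤ) - 1 - (i : ℕ) + 1) t
          / (x * Ueval k t) := by
        simp only [h]
        split_ifs with hle
        · rw [show ((i : ℕ) : ℤ) = (j : ℕ) + 1 by omega]
          congr 3 <;> ring
        · congr 3; ring
      rw [hb]
      simp only [h]
      rw [if_neg (by omega), if_neg (by omega), e2,
        show (k : ℤ) - 1 - ((i : ℕ) + 1) = k - 1 - (i : ℕ) - 1 by ring]
      ring
  linear_combination key + h (i : ℕ) * ht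

attribute [local instance] Matrix.linftyOpNormedRing Matrix.linftyOpNormedAlgebra in
/-- Below the inverse of the maximal degree `3`, the Neumann series converges to the resolvent. -/
lemma hasSum_trace {k : ℕ} {x t : ℝ} (hx0 : 0 < x) (hx3 : x < 1 / 3) (ht : 1 - x = x * (2 * t))
    (hU : Ueval k t ≠ 0) :
    HasSum (fun n : ℕ => (smoothMat k ^ n).trace * x ^ n) (smoothResolvent k x t).trace := by
  have hn : ‖x • smoothMat k‖ < 1 := by
    rw [Matrix.linfty_opNorm_def, ← NNReal.coe_one, NNReal.coe_lt_coe,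
      Finset.sup_lt_iff (by simp)]
    intro i _
    rw [← NNReal.coe_lt_coe]
    push_cast
    have h1 : ∀ a : ℤ, ∑ m : Fin k, (if ((m : ℕ) : ℤ) = a then (1 : ℝ) else 0) ≤ 1 := by
      intro a
      rw [Finset.sum_boole]
      have : (Finset.univ.filter fun m : Fin k => ((m : ℕ) : ℤ) = a).card ≤ 1 :=
        Finset.card_le_one.2 fun p hp q hq => by
          simp only [Finset.mem_filter, Finset.mem_univ, true_and] at hp hq
          exact Fin.ext (by omega)
      exact_mod_cast this
    have h2 : ∑ m : Fin k, smoothMat k i m ≤ 3 := by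
      rw [Finset.sum_congr rfl fun m _ => (mul_one (smoothMat k i m)).symm]
      simp only [smoothMat_apply_mul, Finset.sum_add_distrib]
      linarith [h1 ((i : ℕ) - 1), h1 (i : ℕ), h1 ((i : ℕ) + 1)]
    have h3 : ∀ m, ‖(x • smoothMat k) i m‖ = x * smoothMat k i m := fun m => by
      rw [Matrix.smul_apply, smul_eq_mul, Real.norm_eq_abs, abs_of_nonneg]
      refine mul_nonneg hx0.le ?_
      simp only [smoothMat, Matrix.of_apply]
      split_ifs <;> norm_num
    simp only [h3, ← Finset.mul_sum]
    nlinarith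
  have : CompleteSpace (Matrix (Fin k) (Fin k) ℝ) := FiniteDimensional.complete ℝ _
  have hsum := (summable_geometric_of_norm_lt_one hn).hasSum
  -- The matrix topology and the topology of the row-sum norm agree definitionally.
  obtain ⟨G, hres, hG⟩ : ∃ G : Matrix (Fin k) (Fin k) ℝ,
      HasSum (fun n : ℕ => (x • smoothMat k) ^ n) G ∧ G * (1 - x • smoothMat k) = 1 :=
    ⟨_, hsum, geom_series_mul_neg _ hn⟩
  rw [left_inv_eq_right_inv hG (one_sub_mul_resolvent hx0.ne' ht hU)] at hres
  have h := hres.map (Matrix.traceAddMonoidHom (Fin k) ℝ) (continuous_id.matrix_trace)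
  refine h.congr_fun ?_
  intro n
  simp [smul_pow, mul_comm]

lemma trace_resolvent (k : ℕ) (x t : ℝ) :
    (smoothResolvent k x t).trace =
      (∑ i ∈ Finset.range k, Ueval i t * Ueval ((k : ℤ) - 1 - i) t) / (x * Ueval k t) := by
  rw [Finset.sum_div, Finset.sum_range]
  simp [Matrix.trace, smoothResolvent]

lemma scw_zero (k : ℕ) : scw 0 k = 1 := by
  have : Unique {σ : Fin 0 → Fin k // IsSmoothCyclic σ} :=
    { default := ⟨Fin.elim0, fun i hi => by omega, fun h => by omega⟩
      uniq := fun a => Subtype.ext (Subsingleton.elim _ _) }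
  exact Nat.card_unique

/-- Theorem 3.2: generating function for the number of smooth cyclic words. -/
theorem smooth_cyclic_words_gf (k : ℕ) (hk : 1 ≤ k) (x : ℝ) (hx0 : 0 < x)
    (hx3 : x < 1 / 3) :
    HasSum (fun n : ℕ => (scw n k : ℝ) * x ^ n)
      (1 + (k : ℝ) * x * (1 + 3 * x) / ((1 + x) * (1 - 3 * x)) -
        (2 * ((k : ℝ) + 1) * x / ((1 + x) * (1 - 3 * x))) *
          Ueval ((k : ℤ) - 1) ((1 - x) / (2 * x)) /
            Ueval (k : ℤ) ((1 - x) / (2 * x))) := by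
  set t : ℝ := (1 - x) / (2 * x) with ht
  have ht' : 1 - x = x * (2 * t) := by rw [ht]; field_simp
  have ht1 : 1 < t := by rw [ht, lt_div_iff₀ (by positivity)]; linarith
  have hU : Ueval (k : ℤ) t ≠ 0 := (Ueval_pos ht1 k).ne'
  have hs := hasSum_trace (k := k) hx0 hx3 ht' hU
  rw [← hasSum_nat_add_iff' 1] at hs ⊢
  simp only [scw_succ, Finset.sum_range_one, scw_zero]
  convert hs using 1
  rw [trace_resolvent, Finset.sum_range_one]
  have hc := Ueval_conv t k
  set S := ∑ i ∈ Finset.range k, Ueval i t * Ueval ((k : ℤ) - 1 - i) t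
  set u := Ueval (k : ℤ) t
  set v := Ueval ((k : ℤ) - 1) t
  have hd1 : 1 + x ≠ 0 := by positivity
  have hd2 : 1 - 3 * x ≠ 0 := by linarith
  have hd : (1 + x) * (1 - 3 * x) = 4 * x ^ 2 * (t ^ 2 - 1) := by
    linear_combination (1 - x + 2 * x * t) * ht'
  have hS : S = 2 * x ^ 2 * (k * t * u - (k + 1) * v) / ((1 + x) * (1 - 3 * x)) := by
    rw [eq_div_iff (mul_ne_zero hd1 hd2)]
    linear_combination S * hd + 2 * x ^ 2 * hc
  rw [hS]
  obtain ⟨D, hD⟩ : ∃ D, D = (1 + x) * (1 - 3 * x) := ⟨_, rfl⟩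
  have hD0 : D ≠ 0 := hD ▸ mul_ne_zero hd1 hd2
  rw [← hD]
  clear_value t S u v
  simp only [pow_zero, Matrix.trace_one, Fintype.card_fin, mul_one, Nat.cast_one]
  field_simp
  linear_combination k * u * ht' + k * u * hD
end

section
/- Let m ≥ 1 be an integer and let x be a real number such that x ≠ cos(jπ/(m+1)) for every integer j with 1 ≤ j ≤ m. Then U_m(x) ≠ 0 and 1/U_m(x) = (1/(m+1)) · ∑_{j=1}^{m} (−1)^{j+1} sin²(jπ/(m+1)) / (x − cos(jπ/(m+1))). -/
/-!
The nodes `c_j = cos (jπ/(m+1))`, `1 ≤ j ≤ m`, are `m` distinct zeros of the degree-`m` polynomial `U_m`,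
whose leading coefficient is `2 ^ m`; hence `U_m` is `2 ^ m` times the nodal polynomial of these
points (`U_eq_C_mul_nodal`). Lagrange interpolation of the constant `1` then gives
`1 / U_m(x) = ∑ j, 1 / (U_m'(c_j) (x - c_j))`. The derivatives at the nodes come from the identity
`(m + 1) T_{m+1} = X U_m - (1 - X²) U_m'`: since `T_{m+1}(c_j) = cos (jπ) = (-1)^j`, it yields
`sin² (jπ/(m+1)) U_m'(c_j) = (m + 1) (-1)^(j+1)` (`sin_sq_mul_derivative_U_node`).
-/

open Real Filter Finset

/-- The `j`-th zero `cos (jπ/(m+1))` of `U_m`, meaningful for `1 ≤ j ≤ m`. -/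
noncomputable def uNode (m j : ℕ) : ℝ := Real.cos ((j : ℝ) * Real.pi / ((m : ℝ) + 1))

lemma angle_mem_Ioo {m j : ℕ} (hj : j ∈ Finset.Icc 1 m) :
    (j : ℝ) * Real.pi / ((m : ℝ) + 1) ∈ Set.Ioo 0 Real.pi := by
  obtain ⟨h1, h2⟩ := Finset.mem_Icc.mp hj
  have h1' : (1 : ℝ) ≤ j := by exact_mod_cast h1
  have h2' : (j : ℝ) ≤ m := by exact_mod_cast h2
  constructor
  · positivity
  · rw [div_lt_iff₀ (by positivity)]
    nlinarith [Real.pi_pos]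

lemma uNode_injOn (m : ℕ) : Set.InjOn (uNode m) (Finset.Icc 1 m : Finset ℕ) := by
  intro i hi j hj hij
  have h := Real.injOn_cos (Set.Ioo_subset_Icc_self (angle_mem_Ioo hi))
    (Set.Ioo_subset_Icc_self (angle_mem_Ioo hj)) hij
  have hm : (m : ℝ) + 1 ≠ 0 := by positivity
  have hpi := Real.pi_ne_zero
  field_simp at h
  exact_mod_cast h

lemma eval_U_node {m j : ℕ} (hj : j ∈ Finset.Icc 1 m) :
    (Polynomial.Chebyshev.U ℝ (m : ℤ)).eval (uNode m j) = 0 := by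
  have hs := (Real.sin_pos_of_mem_Ioo (angle_mem_Ioo hj)).ne'
  have h := Polynomial.Chebyshev.U_real_cos ((j : ℝ) * Real.pi / ((m : ℝ) + 1)) (m : ℤ)
  have hm : (m : ℝ) + 1 ≠ 0 := by positivity
  rw [Int.cast_natCast, mul_div_cancel₀ _ hm, Real.sin_nat_mul_pi] at h
  exact (mul_eq_zero.mp h).resolve_right hs

lemma U_eq_C_mul_nodal (m : ℕ) :
    Polynomial.Chebyshev.U ℝ (m : ℤ) =
      Polynomial.C (2 ^ m) * Lagrange.nodal (Finset.Icc 1 m) (uNode m) := by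
  have h2 : (2 : ℝ) ^ m ≠ 0 := by positivity
  refine Polynomial.eq_of_degree_le_of_eval_index_eq (Finset.Icc 1 m) (uNode_injOn m) ?_ ?_ ?_ ?_
  · simp [Polynomial.Chebyshev.degree_U_natCast]
  · rw [Polynomial.degree_C_mul h2, Lagrange.degree_nodal,
      Polynomial.Chebyshev.degree_U_natCast]
    simp
  · rw [Polynomial.Chebyshev.leadingCoeff_U_natCast, Polynomial.leadingCoeff_mul,
      Polynomial.leadingCoeff_C, Lagrange.nodal_monic.leadingCoeff, mul_one]
  · intro j hj
    rw [eval_U_node hj, Polynomial.eval_mul, Lagrange.eval_nodal_at_node hj, mul_zero]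

lemma sin_sq_mul_derivative_U_node {m j : ℕ} (hj : j ∈ Finset.Icc 1 m) :
    Real.sin ((j : ℝ) * Real.pi / ((m : ℝ) + 1)) ^ 2 *
      (Polynomial.derivative (Polynomial.Chebyshev.U ℝ (m : ℤ))).eval (uNode m j) =
      ((m : ℝ) + 1) * (-1) ^ (j + 1) := by
  have h := congr_arg (Polynomial.eval (uNode m j))
    (Polynomial.Chebyshev.add_one_mul_T_eq_poly_in_U (R := ℝ) (m : ℤ))
  have hT : (Polynomial.Chebyshev.T ℝ ((m : ℤ) + 1)).eval (uNode m j) = (-1) ^ j := by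
    have hm : (m : ℝ) + 1 ≠ 0 := by positivity
    rw [uNode, Polynomial.Chebyshev.T_real_cos]
    push_cast
    rw [mul_div_cancel₀ _ hm, Real.cos_nat_mul_pi]
  simp only [Polynomial.eval_mul, Polynomial.eval_sub, Polynomial.eval_add, Polynomial.eval_one,
    Polynomial.eval_X, Polynomial.eval_pow, hT, eval_U_node hj,
    Int.cast_natCast, Polynomial.eval_natCast] at h
  rw [Real.sin_sq, ← uNode, pow_succ]
  linear_combination h

/-- The barycentric weight of the node `c_j`, obtained as `2 ^ m / U_m'(c_j)`. -/
lemma nodalWeight_uNode {m j : ℕ} (hj : j ∈ Finset.Icc 1 m) :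
    Lagrange.nodalWeight (Finset.Icc 1 m) (uNode m) j =
      2 ^ m * ((-1) ^ (j + 1) * Real.sin ((j : ℝ) * Real.pi / ((m : ℝ) + 1)) ^ 2 /
        ((m : ℝ) + 1)) := by
  have h := sin_sq_mul_derivative_U_node hj
  rw [U_eq_C_mul_nodal, Polynomial.derivative_C_mul, Polynomial.eval_C_mul] at h
  have hm : (m : ℝ) + 1 ≠ 0 := by positivity
  have hsign : ((-1 : ℝ) ^ (j + 1)) * (-1) ^ (j + 1) = 1 := by
    rw [← mul_pow]; norm_num
  rw [Lagrange.nodalWeight_eq_eval_derivative_nodal hj]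
  refine inv_eq_of_mul_eq_one_right ?_
  rw [← mul_div_assoc, ← mul_div_assoc, div_eq_one_iff_eq hm]
  linear_combination (-1) ^ (j + 1) * h + ((m : ℝ) + 1) * hsign

/-- Lemma 2.2 (first identity): partial fraction decomposition of `1 / U_m(x)`. -/
theorem one_div_U_partial_fractions (m : ℕ) (hm : 1 ≤ m) (x : ℝ)
    (hx : ∀ j ∈ Finset.Icc 1 m, x ≠ Real.cos ((j : ℝ) * Real.pi / ((m : ℝ) + 1))) :
    Ueval (m : ℤ) x ≠ 0 ∧
    1 / Ueval (m : ℤ) x = (1 / ((m : ℝ) + 1)) * ∑ j ∈ Finset.Icc 1 m,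
      (-1 : ℝ) ^ (j + 1) * Real.sin ((j : ℝ) * Real.pi / ((m : ℝ) + 1)) ^ 2 /
        (x - Real.cos ((j : ℝ) * Real.pi / ((m : ℝ) + 1))) := by
  have hU : Ueval (m : ℤ) x =
      2 ^ m * (Lagrange.nodal (Finset.Icc 1 m) (uNode m)).eval x := by
    rw [Ueval, U_eq_C_mul_nodal, Polynomial.eval_C_mul]
  have hne : Ueval (m : ℤ) x ≠ 0 := by
    rw [hU]
    exact mul_ne_zero (by positivity) (Lagrange.eval_nodal_not_at_node hx)
  refine ⟨hne, ?_⟩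
  -- The barycentric form of the interpolant of the constant function `1`.
  have h1 := Lagrange.eval_interpolate_not_at_node (v := uNode m) (fun _ => (1 : ℝ)) hx
  rw [show (fun _ : ℕ => (1 : ℝ)) = 1 from rfl,
    Lagrange.interpolate_one (uNode_injOn m) (Finset.nonempty_Icc.mpr hm),
    Polynomial.eval_one] at h1
  rw [div_eq_iff hne, hU]
  refine h1.trans ?_
  rw [Finset.mul_sum, Finset.mul_sum, Finset.sum_mul]
  refine Finset.sum_congr rfl fun j hj => ?_
  rw [nodalWeight_uNode hj, ← uNode]
  ring
end

section
/- Fix an integer k ≥ 1. Then sw_{n,k} / [(2/(k+1)) · cot²(π/(2(k+1))) · (1 + 2cos(π/(k+1)))^{n−1}] tends to 1 as n → ∞. -/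
/-!
Let `A` be the `k × k` matrix with `A i j = 1` when `|i - j| ≤ 1` and `0` otherwise, so that
`sw (n + 1) k` is the sum of the entries of `A ^ n`. With `θ = π / (k + 1)`, the vectors
`j ↦ sin (j m θ)`, `1 ≤ m ≤ k`, are eigenvectors of `A` for the eigenvalues `1 + 2 cos (m θ)`
(`sum_band_sin`), and the discrete sine transform is orthogonal (`sum_sin_mul_sin`). Expanding the
all-ones vector in this basis gives the exact formula
`sw (n + 1) k = 2 / (k + 1) * ∑ m, (1 + 2 cos (m θ)) ^ n * (∑ j, sin (j m θ)) ^ 2`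
(`sw_succ_eq`). The eigenvalue for `m = 1` strictly dominates the others in absolute value
(`abs_eigenvalue_lt`), and `∑ j, sin (j θ) = cot (θ / 2)` (`sum_sin_eq_cot`), which is the
asserted leading term.
-/

open Real Filter Finset

/-! ### The transfer recursion -/

open Classical in
/-- The number of smooth words of length `n + 1` with first letter `i`, as a real number. -/
noncomputable def wordsFrom (k n : ℕ) (i : Fin k) : ℝ :=
  ∑ σ : Fin n → Fin k, if IsSmooth (Fin.cons i σ : Fin (n + 1) → Fin k) then 1 else 0

lemma isSmooth_cons_cons {n k : ℕ} (i j : Fin k) (τ : Fin n → Fin k) :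
    IsSmooth (Fin.cons i (Fin.cons j τ : Fin (n + 1) → Fin k) : Fin (n + 2) → Fin k) ↔
      |((j : ℕ) : ℤ) - ((i : ℕ) : ℤ)| ≤ 1 ∧
        IsSmooth (Fin.cons j τ : Fin (n + 1) → Fin k) := by
  have hval : ∀ {m : ℕ} (x : Fin k) (ρ : Fin m → Fin k) (a : ℕ) (ha : a + 1 < m + 1),
      (Fin.cons x ρ : Fin (m + 1) → Fin k) ⟨a + 1, ha⟩ = ρ ⟨a, Nat.lt_of_succ_lt_succ ha⟩ :=
    fun _ _ _ _ => rfl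
  have hval0 : ∀ {m : ℕ} (x : Fin k) (ρ : Fin m → Fin k) (h : 0 < m + 1),
      (Fin.cons x ρ : Fin (m + 1) → Fin k) ⟨0, h⟩ = x := fun _ _ _ => rfl
  constructor
  · intro h
    constructor
    · have h0 := h 0 (by omega)
      rwa [hval, hval0, hval0] at h0
    · intro a ha
      have h1 := h (a + 1) (by omega)
      rwa [hval, hval i _ a] at h1
  · rintro ⟨h0, h⟩ a ha
    cases a with
    | zero => rwa [hval, hval0, hval0]
    | succ a =>
      rw [hval, hval i _ a]
      exact h a (by omega)

lemma wordsFrom_zero (k : ℕ) (i : Fin k) : wordsFrom k 0 i = 1 := by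
  have h : ∀ σ : Fin 0 → Fin k, IsSmooth (Fin.cons i σ : Fin (0 + 1) → Fin k) := by
    intro σ a ha
    omega
  simp [wordsFrom, h]

lemma wordsFrom_succ (k n : ℕ) (i : Fin k) :
    wordsFrom k (n + 1) i =
      ∑ j : Fin k, if |((j : ℕ) : ℤ) - ((i : ℕ) : ℤ)| ≤ 1 then wordsFrom k n j else 0 := by
  classical
  unfold wordsFrom
  rw [← (Fin.consEquiv (fun _ : Fin (n + 1) => Fin k)).sum_comp, Fintype.sum_prod_type]
  refine Finset.sum_congr rfl fun j _ => ?_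
  simp only [Fin.consEquiv, Equiv.coe_fn_mk, isSmooth_cons_cons]
  split_ifs with h <;> simp [h]

lemma sw_succ (k n : ℕ) : (sw (n + 1) k : ℝ) = ∑ i : Fin k, wordsFrom k n i := by
  classical
  unfold sw wordsFrom
  rw [Nat.card_eq_fintype_card, Fintype.card_subtype, Finset.card_filter]
  push_cast
  rw [← (Fin.consEquiv (fun _ : Fin (n + 1) => Fin k)).sum_comp, Fintype.sum_prod_type]
  rfl

/-! ### The eigenvectors of the transfer matrix -/

/-- A function vanishing just outside `1, …, k` may be summed over a letter and its neighbours
without regard to the ends of the alphabet. -/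
lemma sum_band (k : ℕ) (g : ℕ → ℝ) (h0 : g 0 = 0) (hk : g (k + 1) = 0) (i : Fin k) :
    (∑ j : Fin k, if |((j : ℕ) : ℤ) - ((i : ℕ) : ℤ)| ≤ 1 then g (j + 1) else 0) =
      g i + g (i + 1) + g (i + 2) := by
  rw [Fin.sum_univ_eq_sum_range
    (fun j : ℕ => if |(j : ℤ) - ((i : ℕ) : ℤ)| ≤ 1 then g (j + 1) else 0) k]
  have hext : (∑ j ∈ Finset.range k,
      if |(j : ℤ) - ((i : ℕ) : ℤ)| ≤ 1 then g (j + 1) else 0) =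
      ∑ j ∈ Finset.range (k + 2), if |(j : ℤ) - ((i : ℕ) + 1 : ℤ)| ≤ 1 then g j else 0 := by
    rw [Finset.sum_range_succ, Finset.sum_range_succ', h0, hk]
    simp
  rw [hext, ← Finset.sum_filter]
  have hi := i.2
  have hset : (Finset.range (k + 2)).filter (fun j : ℕ => |(j : ℤ) - ((i : ℕ) + 1 : ℤ)| ≤ 1) =
      {(i : ℕ), (i : ℕ) + 1, (i : ℕ) + 2} := by
    ext j
    simp only [Finset.mem_filter, Finset.mem_range, Finset.mem_insert, Finset.mem_singleton,
      abs_le]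
    omega
  rw [hset, Finset.sum_insert (by simp), Finset.sum_insert (by simp), Finset.sum_singleton]
  ring

lemma sum_band_sin (k : ℕ) (x : ℝ) (hx : sin (((k : ℝ) + 1) * x) = 0) (i : Fin k) :
    (∑ j : Fin k, if |((j : ℕ) : ℤ) - ((i : ℕ) : ℤ)| ≤ 1 then
        sin ((((j : ℕ) : ℝ) + 1) * x) else 0) =
      (1 + 2 * cos x) * sin ((((i : ℕ) : ℝ) + 1) * x) := by
  have h := sum_band k (fun j => sin ((j : ℝ) * x)) (by simp) (by push_cast; exact hx) i
  push_cast at h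
  rw [h]
  have h1 : ((i : ℕ) : ℝ) * x = (((i : ℕ) : ℝ) + 1) * x - x := by ring
  have h2 : (((i : ℕ) : ℝ) + 2) * x = (((i : ℕ) : ℝ) + 1) * x + x := by ring
  rw [h1, h2, sin_sub, sin_add]
  ring

/-! ### Orthogonality of the discrete sine transform -/

lemma two_mul_sin_half_mul_sum_cos (k : ℕ) (x : ℝ) :
    2 * sin (x / 2) * ∑ m ∈ Finset.range k, cos (((m : ℝ) + 1) * x) =
      sin (((k : ℝ) + 1 / 2) * x) - sin (x / 2) := by
  induction k with
  | zero => simp; ring_nf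
  | succ k ih =>
    rw [Finset.sum_range_succ, mul_add, ih]
    have h1 : ((k : ℝ) + 1 / 2) * x = ((k : ℝ) + 1) * x - x / 2 := by ring
    have h2 : (((k + 1 : ℕ) : ℝ) + 1 / 2) * x = ((k : ℝ) + 1) * x + x / 2 := by
      push_cast; ring
    rw [h1, h2, sin_sub, sin_add]
    ring

/-- The value of the cosine sum depends only on the parity of `d`, as long as `d` is not a multiple
of `2 (k + 1)`. -/
lemma sum_cos_int (k : ℕ) (d : ℤ) (hd : ¬ (2 * ((k : ℤ) + 1)) ∣ d) :
    ∑ m ∈ Finset.range k, cos (((m : ℝ) + 1) * ((d : ℝ) * (π / ((k : ℝ) + 1)))) =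
      -(1 + (-1) ^ d) / 2 := by
  set x : ℝ := (d : ℝ) * (π / ((k : ℝ) + 1)) with hx
  have hk : ((k : ℝ) + 1) ≠ 0 := by positivity
  have hs : sin (x / 2) ≠ 0 := by
    intro h
    obtain ⟨c, hc⟩ := sin_eq_zero_iff.1 h
    apply hd
    refine ⟨c, ?_⟩
    rw [hx] at hc
    field_simp at hc
    have : (d : ℝ) = 2 * ((k : ℝ) + 1) * c := by linarith
    exact_mod_cast this
  have h := two_mul_sin_half_mul_sum_cos k x
  have h1 : ((k : ℝ) + 1 / 2) * x = (d : ℝ) * π - x / 2 := by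
    rw [hx]; field_simp; ring
  rw [h1, sin_sub, sin_int_mul_pi, cos_int_mul_pi] at h
  apply mul_left_cancel₀ hs
  linarith

lemma sum_sin_mul_sin (k : ℕ) (i j : Fin k) :
    ∑ m ∈ Finset.range k,
        sin ((((i : ℕ) : ℝ) + 1) * (((m : ℝ) + 1) * (π / ((k : ℝ) + 1)))) *
          sin ((((j : ℕ) : ℝ) + 1) * (((m : ℝ) + 1) * (π / ((k : ℝ) + 1)))) =
      if i = j then ((k : ℝ) + 1) / 2 else 0 := by
  have hi := i.2
  have hj := j.2
  set θ : ℝ := π / ((k : ℝ) + 1)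
  have hprod : ∀ m : ℕ, sin ((((i : ℕ) : ℝ) + 1) * (((m : ℝ) + 1) * θ)) *
      sin ((((j : ℕ) : ℝ) + 1) * (((m : ℝ) + 1) * θ)) =
      (cos (((m : ℝ) + 1) * (((((i : ℕ) : ℤ) - ((j : ℕ) : ℤ) : ℤ) : ℝ) * θ)) -
        cos (((m : ℝ) + 1) * (((((i : ℕ) : ℤ) + ((j : ℕ) : ℤ) + 2 : ℤ) : ℝ) * θ))) / 2 := by
    intro m
    push_cast
    have h1 : ((m : ℝ) + 1) * ((((i : ℕ) : ℝ) - ((j : ℕ) : ℝ)) * θ) =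
        (((i : ℕ) : ℝ) + 1) * (((m : ℝ) + 1) * θ) -
          (((j : ℕ) : ℝ) + 1) * (((m : ℝ) + 1) * θ) := by ring
    have h2 : ((m : ℝ) + 1) * ((((i : ℕ) : ℝ) + ((j : ℕ) : ℝ) + 2) * θ) =
        (((i : ℕ) : ℝ) + 1) * (((m : ℝ) + 1) * θ) +
          (((j : ℕ) : ℝ) + 1) * (((m : ℝ) + 1) * θ) := by ring
    rw [h1, h2, cos_sub, cos_add]
    ring
  simp only [hprod]
  rw [← Finset.sum_div, Finset.sum_sub_distrib]
  have hadd : ¬ (2 * ((k : ℤ) + 1)) ∣ (((i : ℕ) : ℤ) + ((j : ℕ) : ℤ) + 2) := by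
    intro h
    have := Int.le_of_dvd (by omega) h
    omega
  rw [sum_cos_int k _ hadd]
  split_ifs with hij
  · subst hij
    have he : ((-1 : ℝ)) ^ (((i : ℕ) : ℤ) + ((i : ℕ) : ℤ) + 2) = 1 :=
      Even.neg_one_zpow ⟨((i : ℕ) : ℤ) + 1, by ring⟩
    rw [he]
    simp
  · have hne : (i : ℕ) ≠ (j : ℕ) := fun h => hij (Fin.ext h)
    have hsub : ¬ (2 * ((k : ℤ) + 1)) ∣ (((i : ℕ) : ℤ) - ((j : ℕ) : ℤ)) := by
      intro h
      have := Int.eq_zero_of_abs_lt_dvd h (by rw [abs_lt]; omega)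
      omega
    rw [sum_cos_int k _ hsub]
    have he : ((-1 : ℝ)) ^ (((i : ℕ) : ℤ) + ((j : ℕ) : ℤ) + 2) =
        (-1) ^ (((i : ℕ) : ℤ) - ((j : ℕ) : ℤ)) := by
      have h : ((i : ℕ) : ℤ) + ((j : ℕ) : ℤ) + 2 =
          (((i : ℕ) : ℤ) - ((j : ℕ) : ℤ)) + 2 * (((j : ℕ) : ℤ) + 1) := by ring
      rw [h, zpow_add₀ (by norm_num), Even.neg_one_zpow (even_two_mul _), mul_one]
    rw [he]
    ring

/-! ### The exact formula -/

/-- The sum of the entries of the eigenvector with index `m + 1`. -/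
noncomputable def sineSum (k m : ℕ) : ℝ :=
  ∑ j : Fin k, sin ((((j : ℕ) : ℝ) + 1) * (((m : ℝ) + 1) * (π / ((k : ℝ) + 1))))

/-- The eigenvalue with index `m + 1` of the transfer matrix. -/
noncomputable def eigenvalue (k m : ℕ) : ℝ :=
  1 + 2 * cos (((m : ℝ) + 1) * (π / ((k : ℝ) + 1)))

lemma wordsFrom_eq (k n : ℕ) (i : Fin k) :
    wordsFrom k n i = ∑ m ∈ Finset.range k, 2 / ((k : ℝ) + 1) * eigenvalue k m ^ n *
      sineSum k m * sin ((((i : ℕ) : ℝ) + 1) * (((m : ℝ) + 1) * (π / ((k : ℝ) + 1)))) := by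
  have hk : ((k : ℝ) + 1) ≠ 0 := by positivity
  induction n generalizing i with
  | zero =>
    rw [wordsFrom_zero]
    have hterm : ∀ m ∈ Finset.range k, 2 / ((k : ℝ) + 1) * eigenvalue k m ^ 0 *
        sineSum k m * sin ((((i : ℕ) : ℝ) + 1) * (((m : ℝ) + 1) * (π / ((k : ℝ) + 1)))) =
        ∑ j : Fin k, 2 / ((k : ℝ) + 1) *
          (sin ((((i : ℕ) : ℝ) + 1) * (((m : ℝ) + 1) * (π / ((k : ℝ) + 1)))) *
            sin ((((j : ℕ) : ℝ) + 1) * (((m : ℝ) + 1) * (π / ((k : ℝ) + 1))))) := by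
      intro m _
      rw [← Finset.mul_sum, ← Finset.mul_sum]
      unfold sineSum
      ring
    rw [Finset.sum_congr rfl hterm, Finset.sum_comm]
    simp only [← Finset.mul_sum, sum_sin_mul_sin]
    simp
    field_simp
  | succ n ih =>
    rw [wordsFrom_succ]
    have hterm : ∀ j : Fin k, (if |((j : ℕ) : ℤ) - ((i : ℕ) : ℤ)| ≤ 1 then wordsFrom k n j else 0) =
        ∑ m ∈ Finset.range k, 2 / ((k : ℝ) + 1) * eigenvalue k m ^ n * sineSum k m *
          (if |((j : ℕ) : ℤ) - ((i : ℕ) : ℤ)| ≤ 1 then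
            sin ((((j : ℕ) : ℝ) + 1) * (((m : ℝ) + 1) * (π / ((k : ℝ) + 1)))) else 0) := by
      intro j
      split_ifs
      · exact ih j
      · simp
    rw [Finset.sum_congr rfl fun j _ => hterm j, Finset.sum_comm]
    refine Finset.sum_congr rfl fun m _ => ?_
    have hx : sin (((k : ℝ) + 1) * (((m : ℝ) + 1) * (π / ((k : ℝ) + 1)))) = 0 := by
      have h : ((k : ℝ) + 1) * (((m : ℝ) + 1) * (π / ((k : ℝ) + 1))) =
          ((m + 1 : ℕ) : ℝ) * π := by
        push_cast; field_simp
      rw [h, sin_nat_mul_pi]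
    rw [← Finset.mul_sum, sum_band_sin k _ hx i, ← eigenvalue]
    ring

lemma sw_succ_eq (k n : ℕ) :
    (sw (n + 1) k : ℝ) =
      ∑ m ∈ Finset.range k, 2 / ((k : ℝ) + 1) * sineSum k m ^ 2 * eigenvalue k m ^ n := by
  rw [sw_succ]
  simp only [wordsFrom_eq]
  rw [Finset.sum_comm]
  refine Finset.sum_congr rfl fun m _ => ?_
  rw [← Finset.mul_sum, ← sineSum]
  ring

/-! ### The dominant term -/

lemma two_mul_sin_half_mul_sum_sin (k : ℕ) (x : ℝ) :
    2 * sin (x / 2) * ∑ m ∈ Finset.range k, sin (((m : ℝ) + 1) * x) =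
      cos (x / 2) - cos (((k : ℝ) + 1 / 2) * x) := by
  induction k with
  | zero => simp; ring_nf
  | succ k ih =>
    rw [Finset.sum_range_succ, mul_add, ih]
    have h1 : ((k : ℝ) + 1 / 2) * x = ((k : ℝ) + 1) * x - x / 2 := by ring
    have h2 : (((k + 1 : ℕ) : ℝ) + 1 / 2) * x = ((k : ℝ) + 1) * x + x / 2 := by
      push_cast; ring
    rw [h1, h2, cos_sub, cos_add]
    ring

lemma sum_sin_eq_cot (k : ℕ) : sineSum k 0 = Real.cot (π / (2 * ((k : ℝ) + 1))) := by
  have hk : (0 : ℝ) < (k : ℝ) + 1 := by positivity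
  have hhalf : π / ((k : ℝ) + 1) / 2 = π / (2 * ((k : ℝ) + 1)) := by field_simp
  have hs : 0 < sin (π / (2 * ((k : ℝ) + 1))) := by
    apply sin_pos_of_pos_of_lt_pi (by positivity)
    rw [div_lt_iff₀ (by positivity)]
    nlinarith [pi_pos, mul_nonneg pi_pos.le (Nat.cast_nonneg (α := ℝ) k)]
  have h := two_mul_sin_half_mul_sum_sin k (π / ((k : ℝ) + 1))
  have h1 : ((k : ℝ) + 1 / 2) * (π / ((k : ℝ) + 1)) = π - π / (2 * ((k : ℝ) + 1)) := by
    field_simp; ring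
  rw [h1, cos_pi_sub, hhalf] at h
  unfold sineSum
  rw [Fin.sum_univ_eq_sum_range
    (fun j : ℕ => sin (((j : ℝ) + 1) * ((((0 : ℕ) : ℝ) + 1) * (π / ((k : ℝ) + 1))))) k]
  simp only [Nat.cast_zero, zero_add, one_mul]
  rw [Real.cot_eq_cos_div_sin, eq_div_iff hs.ne']
  linarith

lemma eigenvalue_zero_pos (k : ℕ) (hk : 1 ≤ k) : 0 < eigenvalue k 0 := by
  have hk' : (1 : ℝ) ≤ k := by exact_mod_cast hk
  have h : 0 ≤ cos (π / ((k : ℝ) + 1)) := by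
    apply cos_nonneg_of_neg_pi_div_two_le_of_le
    · have : 0 ≤ π / ((k : ℝ) + 1) := by positivity
      linarith [pi_pos]
    · apply div_le_div_of_nonneg_left pi_pos.le two_pos
      linarith
  simp only [eigenvalue, Nat.cast_zero, zero_add, one_mul]
  linarith

/-- With `θ = π / (k + 1)`, the upper bound is monotonicity of the cosine, and the lower bound comes
from `cos (m θ) ≥ cos (k θ) = -cos θ`. -/
lemma abs_eigenvalue_lt (k m : ℕ) (hm0 : 0 < m) (hm : m < k) :
    |eigenvalue k m| < eigenvalue k 0 := by
  have hk : (0 : ℝ) < (k : ℝ) + 1 := by positivity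
  have hm0' : (0 : ℝ) < m := by exact_mod_cast hm0
  have hm' : (m : ℝ) + 1 ≤ k := by exact_mod_cast hm
  set θ : ℝ := π / ((k : ℝ) + 1) with hθ
  have hθ0 : 0 < θ := by positivity
  have hθk : ((k : ℝ) + 1) * θ = π := by rw [hθ]; field_simp
  have hle : ((m : ℝ) + 1) * θ ≤ π - θ := by
    have := mul_le_mul_of_nonneg_right hm' hθ0.le
    linarith
  have hlt : θ < ((m : ℝ) + 1) * θ := by nlinarith
  have h1 : cos (((m : ℝ) + 1) * θ) < cos θ :=
    cos_lt_cos_of_nonneg_of_le_pi hθ0.le (by linarith) hlt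
  have h2 : -cos θ ≤ cos (((m : ℝ) + 1) * θ) := by
    rw [← cos_pi_sub]
    exact cos_le_cos_of_nonneg_of_le_pi (by linarith) (by linarith) hle
  simp only [eigenvalue, ← hθ, Nat.cast_zero, zero_add, one_mul]
  rw [abs_lt]
  constructor <;> linarith

/-- Corollary 2.4: asymptotics of the number of smooth words. -/
theorem smooth_words_asymptotics (k : ℕ) (hk : 1 ≤ k) :
    Filter.Tendsto (fun n : ℕ => (sw n k : ℝ) /
        ((2 / ((k : ℝ) + 1)) * Real.cot (Real.pi / (2 * ((k : ℝ) + 1))) ^ 2 *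
          (1 + 2 * Real.cos (Real.pi / ((k : ℝ) + 1))) ^ (n - 1)))
      Filter.atTop (nhds 1) := by
  rw [← Filter.tendsto_add_atTop_iff_nat 1]
  have hpos := eigenvalue_zero_pos k hk
  have hval : (1 + 2 * cos (π / ((k : ℝ) + 1))) = eigenvalue k 0 := by simp [eigenvalue]
  rw [hval, ← sum_sin_eq_cot]
  set C : ℝ := 2 / ((k : ℝ) + 1) * sineSum k 0 ^ 2 with hC
  have hS : 0 < sineSum k 0 := by
    have hk' : (1 : ℝ) ≤ k := by exact_mod_cast hk
    rw [sum_sin_eq_cot, Real.cot_eq_cos_div_sin]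
    have hlt : π / (2 * ((k : ℝ) + 1)) < π / 2 :=
      div_lt_div_of_pos_left pi_pos two_pos (by linarith)
    have h0 : 0 < π / (2 * ((k : ℝ) + 1)) := by positivity
    exact div_pos (cos_pos_of_mem_Ioo ⟨by linarith, hlt⟩)
      (sin_pos_of_pos_of_lt_pi h0 (by linarith))
  have hC0 : C ≠ 0 := by positivity
  have hratio : ∀ n : ℕ, (sw (n + 1) k : ℝ) / (C * eigenvalue k 0 ^ (n + 1 - 1)) =
      ∑ m ∈ Finset.range k, 2 / ((k : ℝ) + 1) * sineSum k m ^ 2 / C *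
        (eigenvalue k m / eigenvalue k 0) ^ n := by
    intro n
    rw [sw_succ_eq, Finset.sum_div, Nat.add_sub_cancel]
    refine Finset.sum_congr rfl fun m _ => ?_
    rw [div_pow, div_mul_div_comm]
  simp only [hratio]
  have hlim : Filter.Tendsto (fun n : ℕ => ∑ m ∈ Finset.range k,
      2 / ((k : ℝ) + 1) * sineSum k m ^ 2 / C * (eigenvalue k m / eigenvalue k 0) ^ n)
      Filter.atTop (nhds (∑ m ∈ Finset.range k, if m = 0 then (1 : ℝ) else 0)) := by
    refine tendsto_finsetSum _ fun m hm => ?_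
    split_ifs with hm0
    · subst hm0
      rw [← hC, div_self hC0, div_self hpos.ne']
      simp
    · have hr : |eigenvalue k m / eigenvalue k 0| < 1 := by
        rw [abs_div, abs_of_pos hpos, div_lt_one hpos]
        exact abs_eigenvalue_lt k m (Nat.pos_of_ne_zero hm0) (Finset.mem_range.1 hm)
      simpa using (tendsto_pow_atTop_nhds_zero_of_abs_lt_one hr).const_mul
        (2 / ((k : ℝ) + 1) * sineSum k m ^ 2 / C)
  have hone : (∑ m ∈ Finset.range k, if m = 0 then (1 : ℝ) else 0) = 1 := by
    rw [Finset.sum_ite_eq' (Finset.range k) 0 (fun _ => (1 : ℝ))]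
    simp; omega
  rwa [hone] at hlim
end
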